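/- Let U be an open set in ℝ^n, n ≥ 3, and let φ:(0,∞)→(0,∞) be a nondecreasing function satisfying ∫_{t_*}^∞ (t/φ(t))^{1/(n−2)} dt < ∞ for some t_* ∈ (0,∞). Then every continuous mapping f:U→ℝ^m, m ≥ 1, of class W^{1,φ}_loc possesses the Luzin (N)-property with respect to (n−1)-dimensional Hausdorff measure on almost every hyperplane P parallel to an arbitrary fixed hyperplane P_0; moreover, f is locally absolutely continuous on almost all such hyperplanes, and on almost all such P one has H^{n−1}(f(E)) = 0 whenever |∇f| = 0 on E ⊂ P. -/

import Mathlib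

open MeasureTheory Metric Set Filter
open scoped ENNReal NNReal Topology RealInnerProductSpace Classical

noncomputable section

abbrev Eucl (n : ℕ) : Type := EuclideanSpace ℝ (Fin n)

/-- A `k`-dimensional surface in `ℝⁿ`: a continuous map defined on an open subset of the
one-point compactification of `ℝᵏ`. -/
structure Surface (n k : ℕ) where
  dom : Set (OnePoint (Eucl k))
  isOpen_dom : IsOpen dom
  toFun : OnePoint (Eucl k) → Eucl n
  continuousOn : ContinuousOn toFun dom

namespace Surface

variable {n k : ℕ}

/-- The multiplicity function `N(S,y)` of a surface. -/
def mult (S : Surface n k) (y : Eucl n) : ℝ≥0∞ :=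
  ((S.dom ∩ S.toFun ⁻¹' {y}).encard : ℕ∞)

/-- The integral `∫_S ρ dA = ∫ ρ(y) N(S,y) dH^k(y)` of `ρ` over the surface `S`. -/
def sint (S : Surface n k) (ρ : Eucl n → ℝ≥0∞) : ℝ≥0∞ :=
  ∫⁻ y, ρ y * S.mult y ∂(μH[(k : ℝ)] : Measure (Eucl n))

end Surface

/-- Admissible functions for a family of `k`-surfaces. -/
def surfAdm {n : ℕ} (k : ℕ) (Γ : Set (Surface n k)) : Set (Eucl n → ℝ≥0∞) :=
  {ρ | Measurable ρ ∧ ∀ S ∈ Γ, 1 ≤ S.sint fun y => ρ y ^ k}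

/-- The `p`-modulus of a family of `k`-surfaces. -/
def surfModulus {n : ℕ} (p : ℝ) (k : ℕ) (Γ : Set (Surface n k)) : ℝ≥0∞ :=
  ⨅ ρ ∈ surfAdm k Γ, ∫⁻ x, ρ x ^ p

/-- Extensively `p`-admissible functions: admissibility may fail on a subfamily of
`p`-modulus zero. -/
def extAdm {n : ℕ} (p : ℝ) (k : ℕ) (Γ : Set (Surface n k)) : Set (Eucl n → ℝ≥0∞) :=
  {ρ | Measurable ρ ∧ surfModulus p k {S ∈ Γ | ¬ 1 ≤ S.sint fun y => ρ y ^ k} = 0}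

/-- The family of the (injectively parametrized, nonempty) surfaces `S(x₀,r) ∩ D`,
`r ∈ I`. -/
def sphereFam {n : ℕ} (D : Set (Eucl n)) (x₀ : Eucl n) (I : Set ℝ) :
    Set (Surface n (n - 1)) :=
  {S | ∃ r ∈ I, S.dom.Nonempty ∧ Set.InjOn S.toFun S.dom ∧
      S.toFun '' S.dom = sphere x₀ r ∩ D}

/-- The image of a family of surfaces under a map `f`. -/
def imageFam {n k : ℕ} (f : Eucl n → Eucl n) (Γ : Set (Surface n k)) :
    Set (Surface n k) :=
  {S' | ∃ S ∈ Γ, S'.dom = S.dom ∧ Set.EqOn S'.toFun (f ∘ S.toFun) S.dom}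

/-- The spherical ring `R(x₀,a,b)`. -/
def ringA {n : ℕ} (x₀ : Eucl n) (a b : ℝ) : Set (Eucl n) :=
  {x | a < dist x x₀ ∧ dist x x₀ < b}

/-- `‖Q‖_α(r) = (∫_{D ∩ S(x₀,r)} Q^α dA)^{1/α}`. -/
def sphNorm {n : ℕ} (D : Set (Eucl n)) (x₀ : Eucl n) (Q : Eucl n → ℝ≥0∞)
    (α : ℝ) (r : ℝ) : ℝ≥0∞ :=
  (∫⁻ x in D ∩ sphere x₀ r, Q x ^ α ∂(μH[((n : ℝ) - 1)] : Measure (Eucl n))) ^ (1 / α)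

/-- `f` is a lower `Q`-homeomorphism w.r.t. the `p`-modulus at `x₀`. -/
def IsLowerQHomeoAt {n : ℕ} (D : Set (Eucl n)) (f : Eucl n → Eucl n)
    (Q : Eucl n → ℝ≥0∞) (p : ℝ) (x₀ : Eucl n) (d₀ : ℝ≥0∞) : Prop :=
  ∀ ε ε₀ : ℝ, 0 < ε → ε < ε₀ → ENNReal.ofReal ε₀ < d₀ →
    (⨅ ρ ∈ extAdm p (n - 1) (sphereFam D x₀ (Ioo ε ε₀)),
        ∫⁻ x in ringA x₀ ε ε₀, ρ x ^ p / Q x) ≤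
      surfModulus p (n - 1) (imageFam f (sphereFam D x₀ (Ioo ε ε₀)))

/-- `f` is a homeomorphism of `D` onto `D'`. -/
structure IsHomeoOn {n : ℕ} (f : Eucl n → Eucl n) (D D' : Set (Eucl n)) : Prop where
  continuousOn : ContinuousOn f D
  injOn : Set.InjOn f D
  image_eq : f '' D = D'
  isOpenMapOn : ∀ U : Set (Eucl n), U ⊆ D → IsOpen U → IsOpen (f '' U)

/-- `Df` is the weak (Sobolev) derivative of `f` on `D`, and `f ∈ W^{1,1}_loc(D)`. -/
def IsWeakDerivOn {n m : ℕ} (D : Set (Eucl n)) (f : Eucl n → Eucl m)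
    (Df : Eucl n → Eucl n →L[ℝ] Eucl m) : Prop :=
  LocallyIntegrableOn f D volume ∧ LocallyIntegrableOn Df D volume ∧
  ∀ ψ : Eucl n → ℝ, ContDiff ℝ (⊤ : ℕ∞) ψ → HasCompactSupport ψ → tsupport ψ ⊆ D →
    ∀ v : Eucl n, ∫ x, ψ x • Df x v = - ∫ x, fderiv ℝ ψ x v • f x

/-- The Frobenius norm `|∇f| = (Σ_{i,j} (∂f_i/∂x_j)²)^{1/2}` of a linear map. -/
def frobNorm {n m : ℕ} (A : Eucl n →L[ℝ] Eucl m) : ℝ :=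
  Real.sqrt (∑ i : Fin m, ∑ j : Fin n, (A (EuclideanSpace.single j 1) i) ^ 2)

/-- The Orlicz–Sobolev class `W^{1,φ}_loc(D)` (with explicit weak derivative `Df`). -/
def MemOrliczSobolevOn {n m : ℕ} (φ : ℝ → ℝ) (D : Set (Eucl n))
    (f : Eucl n → Eucl m) (Df : Eucl n → Eucl n →L[ℝ] Eucl m) : Prop :=
  IsWeakDerivOn D f Df ∧
  ∀ K : Set (Eucl n), K ⊆ D → IsCompact K →
    (∫⁻ x in K, ENNReal.ofReal (φ (frobNorm (Df x)))) < ⊤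

/-- `φ` is nondecreasing and positive on `(0,∞)`. -/
def NondecPos (φ : ℝ → ℝ) : Prop :=
  (∀ s t : ℝ, 0 < s → s ≤ t → φ s ≤ φ t) ∧ ∀ t : ℝ, 0 < t → 0 < φ t

/-- The Calderón-type condition `∫_{t₀}^∞ (t/φ(t))^{1/(n-2)} dt < ∞`. -/
def CalderonCond (n : ℕ) (φ : ℝ → ℝ) : Prop :=
  ∃ t₀ : ℝ, 0 < t₀ ∧
    IntegrableOn (fun t => (t / φ t) ^ (1 / ((n : ℝ) - 2))) (Ioi t₀) volume

/-- `f` (with a.e. derivative `Df`) has finite distortion on `D`. -/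
def HasFiniteDistortionOn {n : ℕ} (D : Set (Eucl n))
    (Df : Eucl n → Eucl n →L[ℝ] Eucl n) : Prop :=
  ∃ K : Eucl n → ℝ, AEMeasurable K (volume.restrict D) ∧
    ∀ᵐ x ∂volume.restrict D, 1 ≤ K x ∧ ‖Df x‖ ^ n ≤ K x * (Df x).det

/-- The distortion `K_p(x,f)` for a map with derivative `Df`. -/
def distortionKp {n : ℕ} (p : ℝ) (Df : Eucl n → Eucl n →L[ℝ] Eucl n)
    (x : Eucl n) : ℝ≥0∞ :=
  if (Df x).det ≠ 0 then ENNReal.ofReal (‖Df x‖ ^ p / (Df x).det)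
  else if Df x = 0 then 1 else ⊤

/-- The multiplicity function of a curve `γ : [0,1] → ℝⁿ`. -/
def curveMult {n : ℕ} (γ : ℝ → Eucl n) (y : Eucl n) : ℝ≥0∞ :=
  (({t ∈ Icc (0:ℝ) 1 | γ t = y}).encard : ℕ∞)

/-- The line integral `∫_γ ρ ds = ∫ ρ(y) N(γ,y) dH¹(y)`. -/
def curveInt {n : ℕ} (γ : ℝ → Eucl n) (ρ : Eucl n → ℝ≥0∞) : ℝ≥0∞ :=
  ∫⁻ y, ρ y * curveMult γ y ∂(μH[(1 : ℝ)] : Measure (Eucl n))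

/-- The family of curves joining `A` and `B` in `G`. -/
def curveJoin {n : ℕ} (A B G : Set (Eucl n)) : Set (ℝ → Eucl n) :=
  {γ | ContinuousOn γ (Icc 0 1) ∧ γ 0 ∈ A ∧ γ 1 ∈ B ∧ Set.MapsTo γ (Icc 0 1) G}

/-- The `q`-modulus of a family of curves. -/
def curveModulus {n : ℕ} (q : ℝ) (Γ : Set (ℝ → Eucl n)) : ℝ≥0∞ :=
  ⨅ ρ ∈ {ρ : Eucl n → ℝ≥0∞ | Measurable ρ ∧ ∀ γ ∈ Γ, 1 ≤ curveInt γ ρ},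
    ∫⁻ x, ρ x ^ q

/-- The `q`-capacity of the condenser `(A,C)`, via the modulus of joining curves. -/
def condenserCap {n : ℕ} (q : ℝ) (A C : Set (Eucl n)) : ℝ≥0∞ :=
  curveModulus q (curveJoin (frontier A) (frontier C) (A \ C))

/-- `L(x₀,f) = limsup_{x→x₀} |f(x)-f(x₀)|/|x-x₀|`. -/
def LAt {n : ℕ} (f : Eucl n → Eucl n) (x₀ : Eucl n) : ℝ≥0∞ :=
  limsup (fun x => edist (f x) (f x₀) / edist x x₀) (𝓝[≠] x₀)

/-- `k_p(x₀) = limsup_{ε→0} (⨍_{B(x₀,ε)} K_p(x,f)^{(n-1)/(p-n+1)} dm)^{(p-n+1)/(n-1)}`. -/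
def kpAt {n : ℕ} (p : ℝ) (Df : Eucl n → Eucl n →L[ℝ] Eucl n) (x₀ : Eucl n) : ℝ≥0∞ :=
  limsup (fun ε : ℝ =>
      ((∫⁻ x in ball x₀ ε, distortionKp p Df x ^ (((n:ℝ)-1)/(p-(n:ℝ)+1))) /
        volume (ball x₀ ε)) ^ ((p-(n:ℝ)+1)/((n:ℝ)-1)))
    (𝓝[>] (0:ℝ))

/-- `f` is absolutely continuous on `S` w.r.t. `d`-dimensional Hausdorff measure. -/
def ACOnSet {n m : ℕ} (f : Eucl n → Eucl m) (S : Set (Eucl n)) (d : ℝ) : Prop :=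
  ∀ ε : ℝ, 0 < ε → ∃ δ : ℝ, 0 < δ ∧ ∀ A : Set (Eucl n), A ⊆ S →
    (μH[d] : Measure (Eucl n)) A < ENNReal.ofReal δ →
      (μH[d] : Measure (Eucl m)) (f '' A) < ENNReal.ofReal ε

/-- `f` is locally absolutely continuous on `S` w.r.t. `H^d`. -/
def LocACOnSet {n m : ℕ} (f : Eucl n → Eucl m) (S : Set (Eucl n)) (d : ℝ) : Prop :=
  ∀ x ∈ S, ∃ V ∈ 𝓝 x, ACOnSet f (S ∩ V) d

/-- The Luzin (N)-property of `f` on `S` w.r.t. `d`-dimensional Hausdorff measure. -/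
def LusinNOn {n m : ℕ} (f : Eucl n → Eucl m) (S : Set (Eucl n)) (d : ℝ) : Prop :=
  ∀ A : Set (Eucl n), A ⊆ S → (μH[d] : Measure (Eucl n)) A = 0 →
    (μH[d] : Measure (Eucl m)) (f '' A) = 0

end


lemma tauReal (k : ℕ) (hk : 2 ≤ k) (a b : ℝ) (ha : 0 < a) (hb : 0 < b) (hab : a ≤ b)
    (u : ℝ → ℝ≥0∞) (h1 : ∀ τ ∈ Ioo (0:ℝ) 1, u τ ≤ ENNReal.ofReal b)
    (h2 : ∀ τ ∈ Ioo (0:ℝ) 1, ENNReal.ofReal (τ ^ k) * u τ ≤ ENNReal.ofReal a) :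
    ∫⁻ τ in Ioo (0:ℝ) 1, u τ ≤ ENNReal.ofReal (2 * b * (a / b) ^ (1 / (k:ℝ))) := by
  set T : ℝ := (a / b) ^ (1 / (k:ℝ)) with hT
  have hk0 : (0:ℝ) < k := by positivity
  have hk2 : (2:ℝ) ≤ k := by exact_mod_cast hk
  have hT0 : 0 < T := by positivity
  have hTk : T ^ (k:ℝ) = a / b := by
    rw [hT, ← Real.rpow_mul (by positivity)]; rw [one_div_mul_cancel hk0.ne', Real.rpow_one]
  have hsub : Ioo (0:ℝ) 1 ⊆ Ioc 0 T ∪ (Ioi T ∩ Ioo 0 1) := by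
    intro x hx
    by_cases h : x ≤ T
    · exact Or.inl ⟨hx.1, h⟩
    · exact Or.inr ⟨not_le.1 h, hx⟩
  have key : ∀ τ ∈ Ioo (0:ℝ) 1, u τ ≤ ENNReal.ofReal (a * τ ^ (-(k:ℝ))) := by
    intro τ hτ
    have hp : 0 < τ ^ k := pow_pos hτ.1 k
    have := h2 τ hτ
    rw [Real.rpow_neg hτ.1.le, Real.rpow_natCast, ← div_eq_mul_inv, ENNReal.ofReal_div_of_pos hp]
    rw [ENNReal.le_div_iff_mul_le (Or.inl (by simpa using hp)) (Or.inl ENNReal.ofReal_ne_top), mul_comm]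
    exact this
  have hA : ∫⁻ τ in Ioc 0 T ∩ Ioo 0 1, u τ ≤ ENNReal.ofReal (b * T) := by
    calc ∫⁻ τ in Ioc 0 T ∩ Ioo 0 1, u τ ≤ ∫⁻ τ in Ioc 0 T ∩ Ioo 0 1, ENNReal.ofReal b :=
          setLIntegral_mono' (measurableSet_Ioc.inter measurableSet_Ioo) fun τ hτ => h1 τ hτ.2
      _ ≤ ∫⁻ τ in Ioc 0 T, ENNReal.ofReal b := lintegral_mono_set inter_subset_left
      _ = ENNReal.ofReal (b * T) := by
          simp [ENNReal.ofReal_mul hb.le]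
  have hB : ∫⁻ τ in Ioi T ∩ Ioo 0 1, u τ ≤ ENNReal.ofReal (b * T) := by
    calc ∫⁻ τ in Ioi T ∩ Ioo 0 1, u τ ≤ ∫⁻ τ in Ioi T ∩ Ioo 0 1, ENNReal.ofReal (a * τ ^ (-(k:ℝ))) :=
          setLIntegral_mono' (measurableSet_Ioi.inter measurableSet_Ioo) fun τ hτ => key τ hτ.2
      _ ≤ ∫⁻ τ in Ioi T, ENNReal.ofReal (a * τ ^ (-(k:ℝ))) := lintegral_mono_set inter_subset_left
      _ = ENNReal.ofReal (∫ τ in Ioi T, a * τ ^ (-(k:ℝ))) := by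
          rw [ofReal_integral_eq_lintegral_ofReal]
          · exact (integrableOn_Ioi_rpow_of_lt (by linarith) hT0).const_mul a
          · filter_upwards [ae_restrict_mem measurableSet_Ioi] with τ hτ
            have : 0 < τ := hT0.trans hτ
            positivity
      _ ≤ ENNReal.ofReal (b * T) := by
          apply ENNReal.ofReal_le_ofReal
          rw [integral_const_mul, integral_Ioi_rpow_of_lt (by linarith) hT0]
          rw [Real.rpow_add hT0, Real.rpow_neg hT0.le, hTk, Real.rpow_one]
          have : (a:ℝ) * (-((a/b)⁻¹ * T) / (-(k:ℝ) + 1)) = b * T / (k - 1) := by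
            have : (k:ℝ) - 1 ≠ 0 := by linarith
            have : -(k:ℝ) + 1 ≠ 0 := by linarith
            field_simp
            ring
          rw [this]
          apply div_le_self (by positivity); linarith
  calc ∫⁻ τ in Ioo (0:ℝ) 1, u τ ≤ ∫⁻ τ in (Ioc 0 T ∩ Ioo 0 1) ∪ (Ioi T ∩ Ioo 0 1), u τ := by
        apply lintegral_mono_set
        intro x hx
        rcases hsub hx with h | h
        · exact Or.inl ⟨h, hx⟩
        · exact Or.inr h
    _ ≤ _ := lintegral_union_le _ _ _
    _ ≤ ENNReal.ofReal (b * T) + ENNReal.ofReal (b * T) := add_le_add hA hB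
    _ = _ := by rw [← ENNReal.ofReal_add (by positivity) (by positivity)]; congr 1; ring

lemma tauENN (k : ℕ) (hk : 2 ≤ k) (a b : ℝ≥0∞) (hb0 : b ≠ 0) (hbt : b ≠ ⊤) (hab : a ≤ b)
    (u : ℝ → ℝ≥0∞) (h1 : ∀ τ ∈ Ioo (0:ℝ) 1, u τ ≤ b)
    (h2 : ∀ τ ∈ Ioo (0:ℝ) 1, ENNReal.ofReal (τ ^ k) * u τ ≤ a) :
    ∫⁻ τ in Ioo (0:ℝ) 1, u τ ≤ 2 * b * (a / b) ^ (1 / (k:ℝ)) := by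
  by_cases ha : a = 0
  · have : ∫⁻ τ in Ioo (0:ℝ) 1, u τ = 0 := by
      rw [setLIntegral_congr_fun (g := fun _ => 0) measurableSet_Ioo]
      · simp
      · intro τ hτ
        have := h2 τ hτ
        rw [ha, nonpos_iff_eq_zero, mul_eq_zero] at this
        rcases this with h | h
        · exact absurd h (by simpa using pow_pos hτ.1 k)
        · exact h
    rw [this]; exact bot_le
  have hat : a ≠ ⊤ := ne_top_of_le_ne_top hbt hab
  have hap := ENNReal.toReal_pos ha hat
  have hbp := ENNReal.toReal_pos hb0 hbt
  have := tauReal k hk a.toReal b.toReal hap hbp (ENNReal.toReal_mono hbt hab) u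
    (by simpa [ENNReal.ofReal_toReal hbt] using h1) (by simpa [ENNReal.ofReal_toReal hat] using h2)
  refine this.trans (le_of_eq ?_)
  rw [ENNReal.ofReal_mul (by positivity), ENNReal.ofReal_mul (by positivity), ENNReal.ofReal_toReal hbt,
    ← ENNReal.ofReal_rpow_of_pos (by positivity), ENNReal.ofReal_div_of_pos hbp,
    ENNReal.ofReal_toReal hbt, ENNReal.ofReal_toReal hat]
  simp


section FF
variable {F : Type*} [NormedAddCommGroup F] [NormedSpace ℝ F] [FiniteDimensional ℝ F]
  [MeasurableSpace F] [BorelSpace F] (ν : Measure F) [ν.IsAddHaarMeasure]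

lemma ballAvg (k : ℕ) (hk : 2 ≤ k) (hF : Module.finrank ℝ F = k) (c : F) (r : ℝ) (hr : 0 < r)
    (x : F) (hx : x ∈ closedBall c r) (A : Set F) (hA : MeasurableSet A) :
    ∫⁻ y in closedBall c r, (∫⁻ τ in Ioo (0:ℝ) 1, A.indicator 1 (x + τ • (y - x))) ∂ν ≤
      2 * ν (closedBall c r) * (ν (A ∩ closedBall c r) / ν (closedBall c r)) ^ (1 / (k:ℝ)) := by
  have hmeas : Measurable (fun p : F × ℝ => A.indicator (1 : F → ℝ≥0∞) (x + p.2 • (p.1 - x))) := by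
    apply (measurable_one.indicator hA).comp
    fun_prop
  rw [lintegral_lintegral_swap hmeas.aemeasurable]
  have hb0 : ν (closedBall c r) ≠ 0 := (measure_closedBall_pos ν c hr).ne'
  have hu : ∀ τ : ℝ, ∫⁻ y in closedBall c r, A.indicator (1 : F → ℝ≥0∞) (x + τ • (y - x)) ∂ν
      = ν ({y | x + τ • (y - x) ∈ A} ∩ closedBall c r) := by
    intro τ
    have hm : MeasurableSet {y | x + τ • (y - x) ∈ A} := by
      apply hA.preimage; fun_prop
    have : (fun y => A.indicator (1 : F → ℝ≥0∞) (x + τ • (y - x)))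
        = {y | x + τ • (y - x) ∈ A}.indicator 1 := by
      ext y; simp [indicator]
    rw [this, lintegral_indicator_one hm, Measure.restrict_apply hm]
  apply tauENN k hk _ _ hb0 measure_closedBall_lt_top.ne (measure_mono inter_subset_right)
  · intro τ _
    rw [hu]; exact measure_mono inter_subset_right
  · intro τ hτ
    rw [hu]
    have := Measure.addHaar_image_homothety ν x τ ({y | x + τ • (y - x) ∈ A} ∩ closedBall c r)
    rw [hF, abs_of_pos (pow_pos hτ.1 k)] at this
    rw [← this]
    apply measure_mono
    rintro _ ⟨y, ⟨hy1, hy2⟩, rfl⟩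
    have e : AffineMap.homothety x τ y = x + τ • (y - x) := by
      simp [AffineMap.homothety_apply, add_comm]
    rw [e]
    refine ⟨hy1, ?_⟩
    exact (convex_closedBall c r).add_smul_sub_mem hx hy2 ⟨hτ.1.le, hτ.2.le⟩

lemma layer_bound (s : ℝ) (hs : 0 < s) (g : F → ℝ) (y : F) :
    ENNReal.ofReal (g y) ≤ ENNReal.ofReal s + ∑' i : ℕ, ENNReal.ofReal (2 ^ (i+1) * s) *
      {z | 2 ^ i * s < g z ∧ g z ≤ 2 ^ (i+1) * s}.indicator (1 : F → ℝ≥0∞) y := by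
  by_cases h : g y ≤ s
  · exact (ENNReal.ofReal_le_ofReal h).trans le_self_add
  push Not at h
  obtain ⟨i, hi1, hi2⟩ : ∃ i : ℕ, 2 ^ i * s < g y ∧ g y ≤ 2 ^ (i+1) * s := by
    have hex : ∃ j : ℕ, g y ≤ 2 ^ j * s := by
      obtain ⟨j, hj⟩ := pow_unbounded_of_one_lt (g y / s) (one_lt_two)
      exact ⟨j, by rw [div_lt_iff₀ hs] at hj; exact hj.le⟩
    have h0 : Nat.find hex ≠ 0 := by
      intro h0
      have := Nat.find_spec hex
      rw [h0] at this; simp at this; linarith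
    obtain ⟨i, hi⟩ := Nat.exists_eq_succ_of_ne_zero h0
    refine ⟨i, ?_, ?_⟩
    · have := Nat.find_min hex (m := i) (by omega)
      push Not at this; exact this
    · have := Nat.find_spec hex
      rwa [hi] at this
  refine le_trans ?_ le_add_self
  refine le_trans ?_ (ENNReal.le_tsum i)
  rw [indicator_of_mem (by exact ⟨hi1, hi2⟩)]
  simpa using ENNReal.ofReal_le_ofReal hi2

lemma ballAvgG (k : ℕ) (hk : 2 ≤ k) (hF : Module.finrank ℝ F = k) (c : F) (r : ℝ) (hr : 0 < r)
    (x : F) (hx : x ∈ closedBall c r) (g : F → ℝ) (hg : Measurable g) (s : ℝ) (hs : 0 < s) :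
    ∫⁻ y in closedBall c r, (∫⁻ τ in Ioo (0:ℝ) 1, ENNReal.ofReal (g (x + τ • (y - x)))) ∂ν ≤
      ENNReal.ofReal s * ν (closedBall c r) + ∑' i : ℕ, ENNReal.ofReal (2 ^ (i+1) * s) *
        (2 * ν (closedBall c r) * (ν ({z | 2 ^ i * s < g z ∧ g z ≤ 2 ^ (i+1) * s} ∩ closedBall c r)
          / ν (closedBall c r)) ^ (1 / (k:ℝ))) := by
  set A : ℕ → Set F := fun i => {z | 2 ^ i * s < g z ∧ g z ≤ 2 ^ (i+1) * s} with hAdef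
  have hA : ∀ i, MeasurableSet (A i) := fun i =>
    (measurableSet_lt measurable_const hg).inter (measurableSet_le hg measurable_const)
  have hmeas : ∀ i, Measurable (fun p : F × ℝ => ENNReal.ofReal (2 ^ (i+1) * s) *
      (A i).indicator (1 : F → ℝ≥0∞) (x + p.2 • (p.1 - x))) := by
    intro i
    apply Measurable.const_mul
    apply (measurable_one.indicator (hA i)).comp
    fun_prop
  calc _ ≤ ∫⁻ y in closedBall c r, (∫⁻ τ in Ioo (0:ℝ) 1, (ENNReal.ofReal s +
        ∑' i : ℕ, ENNReal.ofReal (2 ^ (i+1) * s) * (A i).indicator 1 (x + τ • (y - x)))) ∂ν := by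
        gcongr with y τ
        exact layer_bound s hs g _
    _ = ∫⁻ y in closedBall c r, (ENNReal.ofReal s +
        ∑' i : ℕ, ENNReal.ofReal (2 ^ (i+1) * s) *
          ∫⁻ τ in Ioo (0:ℝ) 1, (A i).indicator 1 (x + τ • (y - x))) ∂ν := by
        apply lintegral_congr; intro y
        have hi : ∀ i, Measurable (fun τ : ℝ => (A i).indicator (1 : F → ℝ≥0∞) (x + τ • (y - x))) := by
          intro i
          apply (measurable_one.indicator (hA i)).comp
          fun_prop
        rw [lintegral_add_left measurable_const, lintegral_tsum]
        · simp only [lintegral_const_mul _ (hi _)]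
          simp
        · intro i; exact ((hi i).const_mul _).aemeasurable
    _ = ENNReal.ofReal s * ν (closedBall c r) + 
        ∑' i : ℕ, ENNReal.ofReal (2 ^ (i+1) * s) *
          ∫⁻ y in closedBall c r, (∫⁻ τ in Ioo (0:ℝ) 1, (A i).indicator 1 (x + τ • (y - x))) ∂ν := by
        have hi : ∀ i, Measurable (fun y : F => 
            ∫⁻ τ in Ioo (0:ℝ) 1, (A i).indicator (1 : F → ℝ≥0∞) (x + τ • (y - x))) := by
          intro i
          apply Measurable.lintegral_prod_right' (f := fun p : F × ℝ => (A i).indicator (1 : F → ℝ≥0∞) (x + p.2 • (p.1 - x)))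
          apply (measurable_one.indicator (hA i)).comp
          fun_prop
        rw [lintegral_add_left measurable_const, lintegral_tsum]
        · simp only [lintegral_const_mul _ (hi _)]
          simp
        · intro i; exact ((hi i).const_mul _).aemeasurable
    _ ≤ _ := by
        gcongr with i
        exact ballAvg ν k hk hF c r hr x hx (A i) (hA i)

end FF

lemma holder_layers (k : ℕ) (hk : 2 ≤ k) (P w a : ℕ → ℝ≥0∞) (hw0 : ∀ i, w i ≠ 0) (hwt : ∀ i, w i ≠ ⊤) :
    (∑' i, P i * a i ^ (1 / (k:ℝ))) ^ k ≤
      (∑' i, (P i / w i ^ (1 / (k:ℝ))) ^ ((k:ℝ) / (k - 1))) ^ (k - 1) * ∑' i, w i * a i := by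
  have hk0 : (0:ℝ) < k := by positivity
  have hk2 : (2:ℝ) ≤ k := by exact_mod_cast hk
  have hpq : (k:ℝ).HolderConjugate ((k:ℝ) / (k - 1)) := Real.HolderConjugate.conjExponent (by linarith)
  have := ENNReal.lintegral_mul_le_Lp_mul_Lq (Measure.count : Measure ℕ) hpq
    (f := fun i => (w i * a i) ^ (1 / (k:ℝ))) (g := fun i => P i / w i ^ (1 / (k:ℝ)))
    (by fun_prop) (by fun_prop)
  simp only [lintegral_count, Pi.mul_apply] at this
  have e1 : ∀ i, (w i * a i) ^ (1 / (k:ℝ)) * (P i / w i ^ (1 / (k:ℝ))) = P i * a i ^ (1 / (k:ℝ)) := by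
    intro i
    rw [ENNReal.mul_rpow_of_nonneg _ _ (by positivity), div_eq_mul_inv (P i)]
    have h0 : w i ^ (1 / (k:ℝ)) ≠ 0 := by
      simp [ENNReal.rpow_eq_zero_iff, hw0 i, hwt i]
    have ht : w i ^ (1 / (k:ℝ)) ≠ ⊤ := ENNReal.rpow_ne_top_of_nonneg (by positivity) (hwt i)
    calc _ = (w i ^ (1 / (k:ℝ)) * (w i ^ (1 / (k:ℝ)))⁻¹) * (P i * a i ^ (1 / (k:ℝ))) := by ring
      _ = _ := by rw [ENNReal.mul_inv_cancel h0 ht, one_mul]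
  have e2 : ∀ i, ((w i * a i) ^ (1 / (k:ℝ))) ^ (k:ℝ) = w i * a i := by
    intro i
    rw [← ENNReal.rpow_mul, one_div_mul_cancel hk0.ne', ENNReal.rpow_one]
  simp only [e1, e2] at this
  calc _ = (∑' i, P i * a i ^ (1 / (k:ℝ))) ^ (k:ℝ) := by rw [ENNReal.rpow_natCast]
    _ ≤ _ := ENNReal.rpow_le_rpow this hk0.le
    _ = _ := by
      rw [ENNReal.mul_rpow_of_nonneg _ _ hk0.le, ← ENNReal.rpow_mul, ← ENNReal.rpow_mul,
        one_div_mul_cancel hk0.ne', ENNReal.rpow_one, mul_comm]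
      congr 1
      rw [← ENNReal.rpow_natCast]
      congr 1
      rw [Nat.cast_sub (by omega)]
      have : (k:ℝ) - 1 ≠ 0 := by linarith
      field_simp
      simp

lemma layers_finite (k : ℕ) (hk : 2 ≤ k) (φ : ℝ → ℝ) (hmono : ∀ s t : ℝ, 0 < s → s ≤ t → φ s ≤ φ t)
    (hpos : ∀ t : ℝ, 0 < t → 0 < φ t) (t₀ : ℝ) (ht₀ : 0 < t₀)
    (hint : IntegrableOn (fun t => (t / φ t) ^ (1 / ((k : ℝ) - 1))) (Ioi t₀) volume)
    (s : ℝ) (hs : 0 < s) :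
    ∑' i : ℕ, (ENNReal.ofReal (2 ^ i * s) / ENNReal.ofReal (φ (2 ^ i * s)) ^ (1 / (k:ℝ))) ^ ((k:ℝ) / (k - 1)) ≠ ⊤ := by
  have hk0 : (0:ℝ) < k := by positivity
  have hk2 : (2:ℝ) ≤ k := by exact_mod_cast hk
  have hk1 : (k:ℝ) - 1 > 0 := by linarith
  set e : ℝ := 1 / ((k:ℝ) - 1) with he
  have he0 : 0 < e := by positivity
  set J : ℝ → ℝ≥0∞ := fun t => ENNReal.ofReal ((t / φ t) ^ e) with hJ
  -- finiteness
  have hfin : ∫⁻ t in Ioi (s / 2), J t < ⊤ := by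
    have h1 : ∫⁻ t in Ioi t₀, J t < ⊤ := hint.lintegral_lt_top
    have h2 : ∫⁻ t in Ioc (s/2) t₀, J t < ⊤ := by
      calc _ ≤ ∫⁻ t in Ioc (s/2) t₀, ENNReal.ofReal ((t₀ / φ (s/2)) ^ e) := by
            apply setLIntegral_mono' measurableSet_Ioc
            intro t ht
            have h0 : 0 < t := lt_trans (by positivity) ht.1
            have h3 := hpos (s/2) (by positivity)
            have h4 := hpos t h0
            have h5 := hmono (s/2) t (by positivity) ht.1.le
            apply ENNReal.ofReal_le_ofReal
            have := ht.2
            gcongr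
        _ < ⊤ := by simp [ENNReal.mul_lt_top_iff]
    calc _ ≤ ∫⁻ t in Ioc (s/2) t₀ ∪ Ioi t₀, J t := by
          apply lintegral_mono_set
          intro t ht
          by_cases h : t ≤ t₀
          · exact Or.inl ⟨ht, h⟩
          · exact Or.inr (not_le.1 h)
      _ ≤ _ := lintegral_union_le _ _ _
      _ < ⊤ := ENNReal.add_lt_top.2 ⟨h2, h1⟩
  set I : ℕ → Set ℝ := fun i => Ioc (2 ^ i * (s / 2)) (2 ^ (i+1) * (s/2)) with hI
  have hdisj : Pairwise (Function.onFun Disjoint I) := by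
    have hm : Monotone (fun i : ℕ => (2:ℝ) ^ i * (s / 2)) := by
      intro i j hij
      have : (2:ℝ) ^ i ≤ 2 ^ j := pow_le_pow_right₀ one_le_two hij
      show (2:ℝ) ^ i * (s / 2) ≤ 2 ^ j * (s / 2)
      gcongr
    exact hm.pairwise_disjoint_on_Ioc_succ
  have hsum : ∑' i, ∫⁻ t in I i, J t ≤ ∫⁻ t in Ioi (s/2), J t := by
    rw [← lintegral_iUnion (fun i => measurableSet_Ioc) hdisj]
    apply lintegral_mono_set
    intro t ht
    obtain ⟨i, hi⟩ := mem_iUnion.1 ht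
    refine lt_of_le_of_lt ?_ hi.1
    have : (1:ℝ) ≤ 2 ^ i := one_le_pow₀ one_le_two
    nlinarith
  have hterm : ∀ i : ℕ, (ENNReal.ofReal (2 ^ i * s) / ENNReal.ofReal (φ (2 ^ i * s)) ^ (1 / (k:ℝ))) ^ ((k:ℝ) / (k - 1))
      ≤ ENNReal.ofReal (2 * 2 ^ e) * ∫⁻ t in I i, J t := by
    intro i
    set p : ℝ := 2 ^ i * s with hp
    have hp0 : 0 < p := by positivity
    have hφp := hpos p hp0
    have hIi : I i = Ioc (p/2) p := by
      simp only [hI]; congr 1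
      · rw [hp]; ring
      · rw [hp]; ring
    have e1 : (ENNReal.ofReal p / ENNReal.ofReal (φ p) ^ (1 / (k:ℝ))) ^ ((k:ℝ) / (k - 1))
        = ENNReal.ofReal (p * (p / φ p) ^ e) := by
      rw [ENNReal.ofReal_rpow_of_pos hφp, ← ENNReal.ofReal_div_of_pos (by positivity),
        ENNReal.ofReal_rpow_of_pos (by positivity)]
      congr 1
      rw [Real.div_rpow hp0.le (by positivity), Real.div_rpow hp0.le (by positivity), ← Real.rpow_mul hφp.le]
      have h1 : (k:ℝ) / (k - 1) = 1 + e := by rw [he]; field_simp; ring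
      have h2 : 1 / (k:ℝ) * ((k:ℝ) / (k - 1)) = e := by rw [he]; field_simp
      rw [h2, h1, Real.rpow_add hp0, Real.rpow_one]; ring
    rw [e1, hIi]
    have e2 : ENNReal.ofReal ((p / 2 / φ p) ^ e) * ENNReal.ofReal (p / 2) ≤ ∫⁻ t in Ioc (p/2) p, J t := by
      calc _ = ∫⁻ t in Ioc (p/2) p, ENNReal.ofReal ((p / 2 / φ p) ^ e) := by
            simp only [lintegral_const, Measure.restrict_apply MeasurableSet.univ, univ_inter, Real.volume_Ioc]
            congr 2; ring
        _ ≤ _ := by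
            apply setLIntegral_mono' measurableSet_Ioc
            intro t ht
            have h0 : 0 < t := lt_trans (by positivity) ht.1
            have h4 := hpos t h0
            have h5 := hmono t p h0 ht.2
            apply ENNReal.ofReal_le_ofReal
            have := ht.1.le
            gcongr
    calc _ = ENNReal.ofReal (2 * 2 ^ e) * (ENNReal.ofReal ((p / 2 / φ p) ^ e) * ENNReal.ofReal (p / 2)) := by
          rw [← ENNReal.ofReal_mul (by positivity), ← ENNReal.ofReal_mul (by positivity)]
          congr 1
          have : p / 2 / φ p = (p / φ p) / 2 := by ring
          rw [this, Real.div_rpow (by positivity : 0 ≤ p / φ p) (by positivity : (0:ℝ) ≤ 2)]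
          generalize (p / φ p) ^ e = z
          have : (2:ℝ) ^ e ≠ 0 := by positivity
          field_simp
      _ ≤ _ := by gcongr
  refine ne_top_of_le_ne_top ?_ (ENNReal.tsum_le_tsum hterm)
  rw [ENNReal.tsum_mul_left]
  exact ENNReal.mul_ne_top ENNReal.ofReal_ne_top (lt_of_le_of_lt hsum hfin).ne


section GG
variable {F : Type*} [NormedAddCommGroup F] [NormedSpace ℝ F] [FiniteDimensional ℝ F]
  [MeasurableSpace F] [BorelSpace F]

lemma hausd {Y : Type*} [MetricSpace Y] [MeasurableSpace Y] [BorelSpace Y] (k : ℕ)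
    (W : Set F) (hW : IsOpen W) (h : F → Y) (hc : ContinuousOn h W)
    (μ : Measure F) [IsFiniteMeasure μ]
    (hd : ∀ c r, 0 < r → closedBall c r ⊆ W → ediam (h '' closedBall c r) ^ k ≤ μ (closedBall c r))
    (A : Set F) (hA : A ⊆ W) : (μH[(k:ℝ)] : Measure Y) (h '' A) ≤ μ A := by
  apply ENNReal.le_of_forall_pos_le_add
  intro ε hε _
  have hε' : (ε : ℝ≥0∞) ≠ 0 := by simpa using hε.ne'
  have key : ∀ j : ℕ, ∃ (t : Set F) (r : F → ℝ), t.Countable ∧ t ⊆ A ∧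
      (∀ x ∈ t, r x ∈ {ρ : ℝ | 0 < ρ ∧ closedBall x ρ ⊆ W ∧ ediam (h '' closedBall x ρ) ≤ ((j:ℝ≥0∞) + 1)⁻¹}) ∧
      A ⊆ ⋃ x ∈ t, closedBall x (r x) ∧ ∑' x : t, μ (closedBall (x:F) (r x)) ≤ μ A + ε := by
    intro j
    apply Besicovitch.exists_closedBall_covering_tsum_measure_le μ hε'
      (fun x => {ρ : ℝ | 0 < ρ ∧ closedBall x ρ ⊆ W ∧ ediam (h '' closedBall x ρ) ≤ ((j:ℝ≥0∞) + 1)⁻¹}) A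
    intro x hx δ hδ
    have hxW := hA hx
    have hcx : ContinuousAt h x := hc.continuousAt (hW.mem_nhds hxW)
    have hpos : (0:ℝ≥0∞) < ((j:ℝ≥0∞) + 1)⁻¹ / 2 := by
      apply ENNReal.div_pos <;> simp
    have h1 : h ⁻¹' (eball (h x) (((j:ℝ≥0∞) + 1)⁻¹ / 2)) ∈ 𝓝 x :=
      hcx (Metric.eball_mem_nhds _ hpos)
    obtain ⟨ρ, hρ, hsub⟩ := Metric.nhds_basis_closedBall.mem_iff.1 (Filter.inter_mem h1 (hW.mem_nhds hxW))
    refine ⟨min ρ (δ/2), ⟨by positivity, ?_, ?_⟩, by positivity, ?_⟩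
    · exact (closedBall_subset_closedBall (min_le_left _ _)).trans (hsub.trans inter_subset_right)
    · have : h '' closedBall x (min ρ (δ/2)) ⊆ eball (h x) (((j:ℝ≥0∞) + 1)⁻¹ / 2) := by
        rintro _ ⟨y, hy, rfl⟩
        exact (hsub (closedBall_subset_closedBall (min_le_left _ _) hy)).1
      calc _ ≤ _ := Metric.ediam_mono this
        _ ≤ 2 * (((j:ℝ≥0∞) + 1)⁻¹ / 2) := Metric.ediam_eball_le
        _ = _ := ENNReal.mul_div_cancel (by simp) (by simp)
    · exact lt_of_le_of_lt (min_le_right _ _) (by linarith)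
  choose t r ht1 ht2 ht3 ht4 ht5 using key
  have : ∀ j, Countable (t j) := fun j => (ht1 j).to_subtype
  have hlim : Tendsto (fun j : ℕ => ((j:ℝ≥0∞) + 1)⁻¹) atTop (𝓝 0) := by
    have := (tendsto_add_atTop_iff_nat 1).2 ENNReal.tendsto_inv_nat_nhds_zero
    simpa using this
  refine (Measure.hausdorffMeasure_le_liminf_tsum (k:ℝ) (h '' A) (l := atTop)
    (fun j : ℕ => ((j:ℝ≥0∞) + 1)⁻¹) hlim
    (fun j (x : t j) => h '' closedBall (x:F) (r j x)) ?_ ?_).trans ?_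
  · exact Eventually.of_forall fun j x => (ht3 j x x.2).2.2
  · refine Eventually.of_forall fun j => ?_
    rintro _ ⟨y, hy, rfl⟩
    obtain ⟨x, hx, hxy⟩ := mem_iUnion₂.1 (ht4 j hy)
    exact mem_iUnion.2 ⟨⟨x, hx⟩, mem_image_of_mem h hxy⟩
  · apply liminf_le_of_le
    · isBoundedDefault
    intro b hb
    obtain ⟨j, hj⟩ := hb.exists
    refine hj.trans (le_trans ?_ (ht5 j))
    apply ENNReal.tsum_le_tsum
    intro x
    rw [ENNReal.rpow_natCast]
    exact hd _ _ (ht3 j x x.2).1 (ht3 j x x.2).2.1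

variable (ν : Measure F) [ν.IsAddHaarMeasure]

lemma sum_layers_le (φ : ℝ → ℝ) (hmono : ∀ s t : ℝ, 0 < s → s ≤ t → φ s ≤ φ t)
    (g : F → ℝ) (hg : Measurable g) (s : ℝ) (hs : 0 < s) (B : Set F) (hB : MeasurableSet B) :
    ∑' i : ℕ, ENNReal.ofReal (φ (2 ^ i * s)) * ν ({z | 2 ^ i * s < g z ∧ g z ≤ 2 ^ (i+1) * s} ∩ B)
     ≤ ∫⁻ y in B, {z | s < g z}.indicator (fun z => ENNReal.ofReal (φ (g z))) y ∂ν := by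
  set A : ℕ → Set F := fun i => {z | 2 ^ i * s < g z ∧ g z ≤ 2 ^ (i+1) * s} ∩ B with hAdef
  have hA : ∀ i, MeasurableSet (A i) := fun i =>
    ((measurableSet_lt measurable_const hg).inter (measurableSet_le hg measurable_const)).inter hB
  have hdisj : Pairwise (Function.onFun Disjoint A) := by
    have hm : Monotone (fun i : ℕ => (2:ℝ) ^ i * s) := by
      intro i j hij
      have : (2:ℝ) ^ i ≤ 2 ^ j := pow_le_pow_right₀ one_le_two hij
      show (2:ℝ) ^ i * s ≤ 2 ^ j * s
      gcongr
    intro i j hij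
    have := hm.pairwise_disjoint_on_Ioc_succ hij
    exact ((this.preimage g).mono inter_subset_left inter_subset_left)
  calc _ ≤ ∑' i, ∫⁻ y in A i, {z | s < g z}.indicator (fun z => ENNReal.ofReal (φ (g z))) y ∂ν := by
        apply ENNReal.tsum_le_tsum
        intro i
        calc _ = ∫⁻ y in A i, ENNReal.ofReal (φ (2 ^ i * s)) ∂ν := by simp [hAdef]
          _ ≤ _ := by
            apply setLIntegral_mono' (hA i)
            intro y hy
            have h1 : s ≤ 2 ^ i * s := by
              have : (1:ℝ) ≤ 2 ^ i := one_le_pow₀ one_le_two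
              nlinarith
            rw [indicator_of_mem (show y ∈ {z | s < g z} from lt_of_le_of_lt h1 hy.1.1)]
            exact ENNReal.ofReal_le_ofReal (hmono _ _ (by positivity) hy.1.1.le)
    _ = ∫⁻ y in ⋃ i, A i, {z | s < g z}.indicator (fun z => ENNReal.ofReal (φ (g z))) y ∂ν :=
        (lintegral_iUnion hA hdisj _).symm
    _ ≤ _ := lintegral_mono_set (iUnion_subset fun i => inter_subset_right)

lemma add_pow_le_enn (a b : ℝ≥0∞) (k : ℕ) : (a + b) ^ k ≤ 2 ^ k * (a ^ k + b ^ k) := by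
  rcases le_total a b with h | h
  · calc (a + b) ^ k ≤ (2 * b) ^ k := by rw [two_mul]; gcongr
      _ ≤ _ := by rw [mul_pow]; gcongr; exact le_add_self
  · calc (a + b) ^ k ≤ (2 * a) ^ k := by rw [two_mul]; gcongr
      _ ≤ _ := by rw [mul_pow]; gcongr; exact le_self_add

lemma osc {Y : Type*} [MetricSpace Y] (k : ℕ) (hk : 2 ≤ k) (hF : Module.finrank ℝ F = k)
    (φ : ℝ → ℝ) (hmono : ∀ s t : ℝ, 0 < s → s ≤ t → φ s ≤ φ t)
    (hpos : ∀ t : ℝ, 0 < t → 0 < φ t) (t₀ : ℝ) (ht₀ : 0 < t₀)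
    (hint : IntegrableOn (fun t => (t / φ t) ^ (1 / ((k : ℝ) - 1))) (Ioi t₀) volume) :
    ∃ C1 : ℝ≥0∞, C1 ≠ ⊤ ∧ ∀ s : ℝ, 0 < s → ∃ C2 : ℝ≥0∞, C2 ≠ ⊤ ∧
      ∀ (h : F → Y) (g : F → ℝ), Measurable g → ∀ (c : F) (r : ℝ), 0 < r →
        ContinuousOn h (closedBall c r) →
        (∀ᵐ x ∂ν, ∀ᵐ y ∂ν, x ∈ closedBall c r → y ∈ closedBall c r → edist (h x) (h y) ≤
          ENNReal.ofReal ‖y - x‖ * ∫⁻ τ in Ioo (0:ℝ) 1, ENNReal.ofReal (g (x + τ • (y - x)))) →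
        ediam (h '' closedBall c r) ^ k ≤ ∫⁻ y in closedBall c r, (C1 * ENNReal.ofReal s ^ k +
          C2 * {z | s < g z}.indicator (fun z => ENNReal.ofReal (φ (g z))) y) ∂ν := by
  have hk0 : (0:ℝ) < k := by positivity
  have hω0 : ν (ball (0:F) 1) ≠ 0 := (measure_ball_pos ν _ one_pos).ne'
  have hωt : ν (ball (0:F) 1) ≠ ⊤ := measure_ball_lt_top.ne
  set ω := ν (ball (0:F) 1) with hω
  refine ⟨8 ^ k / ω, ENNReal.div_ne_top (by simp) hω0, fun s hs => ?_⟩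
  have hS := layers_finite k hk φ hmono hpos t₀ ht₀ hint s hs
  set S := ∑' i : ℕ, (ENNReal.ofReal (2 ^ i * s) / ENNReal.ofReal (φ (2 ^ i * s)) ^ (1 / (k:ℝ))) ^ ((k:ℝ) / (k - 1))
  refine ⟨8 ^ k / ω * (4 ^ k * S ^ (k - 1)), ?_, ?_⟩
  · refine ENNReal.mul_ne_top (ENNReal.div_ne_top (by simp) hω0) (ENNReal.mul_ne_top (by simp) ?_)
    exact ENNReal.pow_ne_top hS
  intro h g hg c r hr hcont hae
  set B := closedBall c r with hB
  set b := ν B with hb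
  have hb0 : b ≠ 0 := (measure_closedBall_pos ν c hr).ne'
  have hbt : b ≠ ⊤ := measure_closedBall_lt_top.ne
  have hbω : ENNReal.ofReal r ^ k = b / ω := by
    rw [hb, hB, Measure.addHaar_closedBall ν c hr.le, hF, ENNReal.ofReal_pow hr.le,
      ENNReal.mul_div_cancel_right hω0 hωt]
  set a : ℕ → ℝ≥0∞ := fun i => ν ({z | 2 ^ i * s < g z ∧ g z ≤ 2 ^ (i+1) * s} ∩ B) with ha
  set Z : ℝ≥0∞ := ∑' i : ℕ, ENNReal.ofReal (2 ^ i * s) * a i ^ (1 / (k:ℝ)) with hZ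
  set q : ℝ≥0∞ := (b ^ (1 / (k:ℝ)))⁻¹ with hq
  set M : ℝ≥0∞ := 4 * ENNReal.ofReal r * (ENNReal.ofReal s + 4 * (q * Z)) with hM
  -- pointwise bound
  have hI : ∀ x ∈ B, (∀ᵐ y ∂ν, x ∈ B → y ∈ B → edist (h x) (h y) ≤
          ENNReal.ofReal ‖y - x‖ * ∫⁻ τ in Ioo (0:ℝ) 1, ENNReal.ofReal (g (x + τ • (y - x)))) →
        ∫⁻ y in B, edist (h x) (h y) ∂ν ≤ 2 * ENNReal.ofReal r * b * (ENNReal.ofReal s + 4 * (q * Z)) := by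
    intro x hx hxae
    calc _ ≤ ∫⁻ y in B, (2 * ENNReal.ofReal r) * (∫⁻ τ in Ioo (0:ℝ) 1, ENNReal.ofReal (g (x + τ • (y - x)))) ∂ν := by
          apply lintegral_mono_ae
          filter_upwards [ae_restrict_of_ae hxae, ae_restrict_mem measurableSet_closedBall] with y hy hyB
          refine (hy hx hyB).trans ?_
          gcongr
          rw [← ENNReal.ofReal_ofNat, ← ENNReal.ofReal_mul (by norm_num)]
          apply ENNReal.ofReal_le_ofReal
          have h1 : dist x c ≤ r := hx
          have h2 : dist y c ≤ r := hyB
          rw [← dist_eq_norm]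
          linarith [dist_triangle_right y x c]
      _ = (2 * ENNReal.ofReal r) * ∫⁻ y in B, (∫⁻ τ in Ioo (0:ℝ) 1, ENNReal.ofReal (g (x + τ • (y - x)))) ∂ν := by
          rw [lintegral_const_mul' _ _ (ENNReal.mul_ne_top (by simp) ENNReal.ofReal_ne_top)]
      _ ≤ _ := by
          rw [mul_assoc (2 * ENNReal.ofReal r)]
          gcongr
          refine (ballAvgG ν k hk hF c r hr x hx g hg s hs).trans (le_of_eq ?_)
          rw [mul_add, mul_comm b]
          congr 1
          rw [hZ, ← ENNReal.tsum_mul_left, ← ENNReal.tsum_mul_left, ← ENNReal.tsum_mul_left]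
          congr 1; ext i
          rw [ENNReal.div_rpow_of_nonneg _ _ (by positivity), pow_succ, hq, div_eq_mul_inv]
          have : (2:ℝ) ^ i * 2 * s = 2 * (2 ^ i * s) := by ring
          rw [this, ENNReal.ofReal_mul (by norm_num), ENNReal.ofReal_ofNat]
          simp only [ha, hb, hB]
          ring
  have hdiam : ediam (h '' B) ≤ M := by
    set G : Set F := {x | ∀ᵐ y ∂ν, x ∈ B → y ∈ B → edist (h x) (h y) ≤
          ENNReal.ofReal ‖y - x‖ * ∫⁻ τ in Ioo (0:ℝ) 1, ENNReal.ofReal (g (x + τ • (y - x)))} with hG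
    have hGd : Dense G := Measure.dense_of_ae hae
    have hsub : B ⊆ closure (ball c r ∩ G) := by
      rw [hB, ← closure_ball c hr.ne']
      exact closure_minimal (hGd.open_subset_closure_inter isOpen_ball) isClosed_closure
    have hTB : ball c r ∩ G ⊆ B := inter_subset_left.trans ball_subset_closedBall
    have him : h '' B ⊆ closure (h '' (ball c r ∩ G)) := by
      rintro _ ⟨x, hx, rfl⟩
      exact ((hcont x hx).mono hTB).mem_closure_image (hsub hx)
    refine (Metric.ediam_mono him).trans ?_
    rw [Metric.ediam_closure]
    apply Metric.ediam_le
    rintro _ ⟨x, hx, rfl⟩ _ ⟨x', hx', rfl⟩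
    have h1 := hI x (hTB hx) hx.2
    have h2 := hI x' (hTB hx') hx'.2
    have hm : AEMeasurable (fun y => edist (h x) (h y)) (ν.restrict B) := by
      have : ContinuousOn (fun y => edist (h x) (h y)) B := (continuous_const.edist continuous_id).comp_continuousOn hcont
      exact this.aemeasurable measurableSet_closedBall
    have h3 : edist (h x) (h x') * b ≤ M * b := by
      calc _ = ∫⁻ y in B, edist (h x) (h x') ∂ν := by simp [hb]
        _ ≤ ∫⁻ y in B, (edist (h x) (h y) + edist (h x') (h y)) ∂ν := by
            apply lintegral_mono; intro y
            exact edist_triangle_right _ _ _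
        _ = _ := lintegral_add_left' hm _
        _ ≤ _ := add_le_add h1 h2
        _ = _ := by rw [hM]; ring
    exact (ENNReal.mul_le_mul_iff_left hb0 hbt).1 h3
  have hhol := holder_layers k hk (fun i => ENNReal.ofReal (2 ^ i * s))
    (fun i => ENNReal.ofReal (φ (2 ^ i * s))) a
    (fun i => by simpa using hpos _ (by positivity)) (fun i => ENNReal.ofReal_ne_top)
  have hsum := sum_layers_le ν φ hmono g hg s hs B measurableSet_closedBall
  set R := ∫⁻ y in B, {z | s < g z}.indicator (fun z => ENNReal.ofReal (φ (g z))) y ∂ν with hR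
  have hqk : q ^ k = b⁻¹ := by
    rw [hq, ← ENNReal.inv_pow, ← ENNReal.rpow_natCast, ← ENNReal.rpow_mul, one_div_mul_cancel hk0.ne',
      ENNReal.rpow_one]
  have hC2t : 8 ^ k / ω * (4 ^ k * S ^ (k - 1)) ≠ ⊤ := by
    refine ENNReal.mul_ne_top (ENNReal.div_ne_top (by simp) hω0) (ENNReal.mul_ne_top (by simp) ?_)
    exact ENNReal.pow_ne_top hS
  calc ediam (h '' B) ^ k ≤ M ^ k := by gcongr
    _ = 4 ^ k * (b / ω) * (ENNReal.ofReal s + 4 * (q * Z)) ^ k := by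
        rw [hM, mul_pow, mul_pow, hbω]
    _ ≤ 4 ^ k * (b / ω) * (2 ^ k * (ENNReal.ofReal s ^ k + (4 * (q * Z)) ^ k)) := by
        gcongr; exact add_pow_le_enn _ _ _
    _ = 8 ^ k / ω * ENNReal.ofReal s ^ k * b + 8 ^ k / ω * 4 ^ k * Z ^ k * (b * b⁻¹) := by
        have h8 : (8:ℝ≥0∞) ^ k = 4 ^ k * 2 ^ k := by rw [← mul_pow]; norm_num
        rw [mul_pow, mul_pow, hqk, h8]
        simp only [div_eq_mul_inv]
        ring
    _ ≤ 8 ^ k / ω * ENNReal.ofReal s ^ k * b + 8 ^ k / ω * (4 ^ k * S ^ (k - 1)) * R := by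
        have hZR : Z ^ k ≤ S ^ (k - 1) * R := hhol.trans (mul_le_mul' le_rfl hsum)
        have e : 8 ^ k / ω * (4 ^ k * S ^ (k - 1)) * R = 8 ^ k / ω * 4 ^ k * (S ^ (k - 1) * R) := by ring
        rw [ENNReal.mul_inv_cancel hb0 hbt, mul_one, e]
        gcongr
    _ = _ := by
        rw [lintegral_add_left measurable_const, lintegral_const_mul' _ _ hC2t]
        rw [hR]; simp [hb]

end GG


section SL
variable {F : Type*} [NormedAddCommGroup F] [NormedSpace ℝ F] [FiniteDimensional ℝ F]
  [MeasurableSpace F] [BorelSpace F] (ν : Measure F) [ν.IsAddHaarMeasure]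

lemma sliceFinal {Y : Type*} [MetricSpace Y] [MeasurableSpace Y] [BorelSpace Y]
    (k : ℕ) (hk : 2 ≤ k) (hF : Module.finrank ℝ F = k)
    (φ : ℝ → ℝ) (hmono : ∀ s t : ℝ, 0 < s → s ≤ t → φ s ≤ φ t)
    (hpos : ∀ t : ℝ, 0 < t → 0 < φ t) (t₀ : ℝ) (ht₀ : 0 < t₀)
    (hint : IntegrableOn (fun t => (t / φ t) ^ (1 / ((k : ℝ) - 1))) (Ioi t₀) volume)
    (W : Set F) (hW : IsOpen W) (hWfin : ν W ≠ ⊤) (h : F → Y) (hc : ContinuousOn h W)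
    (g : F → ℝ) (hg : Measurable g) (hφg : ∫⁻ y in W, ENNReal.ofReal (φ (g y)) ∂ν ≠ ⊤)
    (hae : ∀ᵐ x ∂ν, ∀ᵐ y ∂ν, x ∈ W → y ∈ W → edist (h x) (h y) ≤
          ENNReal.ofReal ‖y - x‖ * ∫⁻ τ in Ioo (0:ℝ) 1, ENNReal.ofReal (g (x + τ • (y - x)))) :
    (∀ A ⊆ W, ν A = 0 → (μH[(k:ℝ)] : Measure Y) (h '' A) = 0) ∧
    (∀ ε : ℝ, 0 < ε → ∃ δ : ℝ, 0 < δ ∧ ∀ A ⊆ W, ν A < ENNReal.ofReal δ →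
      (μH[(k:ℝ)] : Measure Y) (h '' A) < ENNReal.ofReal ε) ∧
    (∀ A ⊆ W, (∀ y ∈ A, g y ≤ 0) → (μH[(k:ℝ)] : Measure Y) (h '' A) = 0) := by
  obtain ⟨C1, hC1, hosc⟩ := osc (Y := Y) ν k hk hF φ hmono hpos t₀ ht₀ hint
  have main : ∀ s : ℝ, 0 < s → ∃ C2 : ℝ≥0∞, C2 ≠ ⊤ ∧ ∀ A ⊆ W, (μH[(k:ℝ)] : Measure Y) (h '' A) ≤
      ∫⁻ y in A, (C1 * ENNReal.ofReal s ^ k +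
          C2 * {z | s < g z}.indicator (fun z => ENNReal.ofReal (φ (g z))) y) ∂(ν.restrict W) := by
    intro s hs
    obtain ⟨C2, hC2, hosc2⟩ := hosc s hs
    refine ⟨C2, hC2, fun A hA => ?_⟩
    set ρ : F → ℝ≥0∞ := fun y => C1 * ENNReal.ofReal s ^ k +
          C2 * {z | s < g z}.indicator (fun z => ENNReal.ofReal (φ (g z))) y with hρ
    have hρfin : ∫⁻ y in W, ρ y ∂ν ≠ ⊤ := by
      rw [hρ, lintegral_add_left measurable_const, lintegral_const_mul' _ _ hC2]
      refine ENNReal.add_ne_top.2 ⟨?_, ENNReal.mul_ne_top hC2 (ne_top_of_le_ne_top hφg ?_)⟩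
      · simp only [lintegral_const, Measure.restrict_apply MeasurableSet.univ, univ_inter]
        exact ENNReal.mul_ne_top (ENNReal.mul_ne_top hC1 (by simp)) hWfin
      · apply lintegral_mono
        intro y
        exact indicator_le_self' (fun _ _ => bot_le) y
    have : IsFiniteMeasure ((ν.restrict W).withDensity ρ) := isFiniteMeasure_withDensity hρfin
    have := hausd k W hW h hc ((ν.restrict W).withDensity ρ) ?_ A hA
    · rwa [withDensity_apply'] at this
    · intro c r hr hsub
      rw [withDensity_apply', Measure.restrict_restrict' hW.measurableSet, inter_eq_left.2 hsub]
      apply hosc2 h g hg c r hr (hc.mono hsub)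
      filter_upwards [hae] with x hx
      filter_upwards [hx] with y hy h1 h2
      exact hy (hsub h1) (hsub h2)
  refine ⟨?_, ?_, ?_⟩
  · intro A hA hA0
    obtain ⟨C2, hC2, hm⟩ := main 1 one_pos
    rw [← nonpos_iff_eq_zero]
    refine (hm A hA).trans ?_
    rw [setLIntegral_measure_zero]
    rw [← nonpos_iff_eq_zero, ← hA0]
    exact Measure.restrict_apply_le _ _
  · intro ε hε
    obtain ⟨C2, hC2, hm⟩ := main 1 one_pos
    have hfin : ∫⁻ y, (C1 * ENNReal.ofReal 1 ^ k +
          C2 * {z | 1 < g z}.indicator (fun z => ENNReal.ofReal (φ (g z))) y) ∂(ν.restrict W) ≠ ⊤ := by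
      rw [lintegral_add_left measurable_const, lintegral_const_mul' _ _ hC2]
      refine ENNReal.add_ne_top.2 ⟨?_, ENNReal.mul_ne_top hC2 (ne_top_of_le_ne_top hφg ?_)⟩
      · simp only [lintegral_const, Measure.restrict_apply MeasurableSet.univ, univ_inter]
        exact ENNReal.mul_ne_top (ENNReal.mul_ne_top hC1 (by simp)) hWfin
      · apply lintegral_mono
        intro y
        exact indicator_le_self' (fun _ _ => bot_le) y
    obtain ⟨δ, hδ, hd⟩ := exists_pos_setLIntegral_lt_of_measure_lt hfin
      (ε := ENNReal.ofReal ε) (by simpa using hε)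
    obtain ⟨δ', hδ', hlt⟩ := ENNReal.lt_iff_exists_nnreal_btwn.1 hδ
    refine ⟨δ', by exact_mod_cast hδ', fun A hA hAδ => ?_⟩
    refine (hm A hA).trans_lt (hd A ?_)
    refine (Measure.restrict_apply_le _ _).trans_lt (hAδ.trans ?_)
    simpa using hlt
  · intro A hA hA0
    have hb : ∀ s : ℝ, 0 < s → (μH[(k:ℝ)] : Measure Y) (h '' A) ≤ C1 * ν W * ENNReal.ofReal s ^ k := by
      intro s hs
      obtain ⟨C2, hC2, hm⟩ := main s hs
      have hs0 : MeasurableSet {y | g y ≤ 0} := measurableSet_le hg measurable_const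
      calc _ ≤ _ := hm A hA
        _ ≤ ∫⁻ y in {y | g y ≤ 0}, (C1 * ENNReal.ofReal s ^ k +
          C2 * {z | s < g z}.indicator (fun z => ENNReal.ofReal (φ (g z))) y) ∂(ν.restrict W) :=
            lintegral_mono_set (fun y hy => hA0 y hy)
        _ = ∫⁻ y in {y | g y ≤ 0}, C1 * ENNReal.ofReal s ^ k ∂(ν.restrict W) := by
            apply setLIntegral_congr_fun hs0
            intro y hy
            have : y ∉ {z | s < g z} := by
              have : g y ≤ 0 := hy
              simp only [mem_setOf_eq, not_lt]; linarith
            simp only [indicator_of_notMem this, mul_zero, add_zero]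
        _ ≤ ∫⁻ y, C1 * ENNReal.ofReal s ^ k ∂(ν.restrict W) := setLIntegral_le_lintegral _ _
        _ = _ := by
            simp; ring
    have hlim : Tendsto (fun s : ℝ => C1 * ν W * ENNReal.ofReal s ^ k) (𝓝[>] 0) (𝓝 0) := by
      have h1 : Tendsto (fun s : ℝ => C1 * ν W * ENNReal.ofReal s ^ k) (𝓝[>] 0)
          (𝓝 (C1 * ν W * ENNReal.ofReal 0 ^ k)) := by
        apply ENNReal.Tendsto.const_mul _ (Or.inr (ENNReal.mul_ne_top hC1 hWfin))
        apply ENNReal.Tendsto.pow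
        exact (ENNReal.continuous_ofReal.tendsto 0).mono_left nhdsWithin_le_nhds
      have hk0 : k ≠ 0 := by omega
      simpa [hk0] using h1
    rw [← nonpos_iff_eq_zero]
    apply ge_of_tendsto hlim
    filter_upwards [self_mem_nhdsWithin] with s hs using hb s hs

end SL


section TR
variable {E : Type*} [NormedAddCommGroup E] [NormedSpace ℝ E] [FiniteDimensional ℝ E]
  [MeasurableSpace E] [BorelSpace E] (μ : Measure E) [μ.IsAddHaarMeasure]
  {Y : Type*} [NormedAddCommGroup Y] [NormedSpace ℝ Y] [CompleteSpace Y]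

lemma transl (W : Set E) (hW : IsOpen W) (hWc : Convex ℝ W) (f : E → Y) (hf : Integrable f μ)
    (D : E → E →L[ℝ] Y) (hDm : StronglyMeasurable D) (hD : Integrable D μ)
    (hweak : ∀ ψ : E → ℝ, ContDiff ℝ (⊤ : ℕ∞) ψ → HasCompactSupport ψ → tsupport ψ ⊆ W →
      ∀ v : E, ∫ x, ψ x • D x v ∂μ = - ∫ x, fderiv ℝ ψ x v • f x ∂μ) (h : E) :
    ∀ᵐ x ∂μ, x ∈ W → x + h ∈ W → f (x + h) - f x = ∫ τ in Ioc (0:ℝ) 1, D (x + τ • h) h := by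
  have hO : IsOpen (W ∩ (fun x => x + h) ⁻¹' W) := hW.inter (hW.preimage (by fun_prop))
  have hGm : StronglyMeasurable (fun p : E × ℝ => D (p.1 + p.2 • h)) :=
    hDm.comp_measurable (by fun_prop)
  have hGi0 : Integrable (fun p : E × ℝ => D (p.1 + p.2 • h)) (μ.prod (volume.restrict (Ioc (0:ℝ) 1))) := by
    rw [integrable_prod_iff' hGm.aestronglyMeasurable]
    refine ⟨Eventually.of_forall fun τ => hD.comp_add_right (τ • h), ?_⟩
    have : (fun τ : ℝ => ∫ x, ‖D (x + τ • h)‖ ∂μ) = fun _ => ∫ x, ‖D x‖ ∂μ := by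
      ext τ; exact integral_add_right_eq_self (fun x => ‖D x‖) (τ • h)
    simp only [this]
    exact integrable_const _
  have hGi : Integrable (fun p : E × ℝ => D (p.1 + p.2 • h) h) (μ.prod (volume.restrict (Ioc (0:ℝ) 1))) :=
    hGi0.apply_continuousLinearMap h
  have hIi : Integrable (fun x => ∫ τ in Ioc (0:ℝ) 1, D (x + τ • h) h) μ := hGi.integral_prod_left
  have hfh : Integrable (fun x => f (x + h)) μ := hf.comp_add_right h
  have key := hO.ae_eq_zero_of_integral_contDiff_smul_eq_zero (μ := μ)
    (f := fun x => f (x + h) - f x - ∫ τ in Ioc (0:ℝ) 1, D (x + τ • h) h)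
    (((hfh.sub hf).sub hIi).locallyIntegrable.locallyIntegrableOn _) ?_
  · filter_upwards [key] with x hx h1 h2
    exact sub_eq_zero.1 (hx ⟨h1, h2⟩)
  intro ψ hψ hψc hψs
  have hψcont := hψ.continuous
  obtain ⟨Cψ, hCψ⟩ := hψcont.bounded_above_of_compact_support hψc
  have hdψ : Continuous (fderiv ℝ ψ) := hψ.continuous_fderiv (by simp)
  obtain ⟨Cd, hCd⟩ := hdψ.bounded_above_of_compact_support (hψc.fderiv ℝ)
  have bi : ∀ {u : E → Y}, Integrable u μ → Integrable (fun x => ψ x • u x) μ := fun hu =>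
    hu.bdd_smul Cψ hψcont.aestronglyMeasurable (Eventually.of_forall hCψ)
  have e0 : ∫ x, ψ x • (f (x + h) - f x - ∫ τ in Ioc (0:ℝ) 1, D (x + τ • h) h) ∂μ =
      (∫ x, ψ x • f (x + h) ∂μ - ∫ x, ψ x • f x ∂μ) - ∫ x, (ψ x • ∫ τ in Ioc (0:ℝ) 1, D (x + τ • h) h) ∂μ := by
    have hs : Integrable (fun x => ψ x • f (x + h) - ψ x • f x) μ := (bi hfh).sub (bi hf)
    simp only [smul_sub]
    rw [integral_sub hs (bi hIi), integral_sub (bi hfh) (bi hf)]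
  have e1 : ∫ x, ψ x • f (x + h) ∂μ = ∫ x, ψ (x - h) • f x ∂μ := by
    rw [← integral_add_right_eq_self (fun x => ψ (x - h) • f x) h]; simp
  have hψh : Integrable (fun x => ψ (x - h) • f x) μ :=
    hf.bdd_smul Cψ (by fun_prop) (Eventually.of_forall fun x => hCψ _)
  have hI2 : Integrable (fun p : E × ℝ => fderiv ℝ ψ (p.1 - p.2 • h) h • f p.1)
      (μ.prod (volume.restrict (Ioc (0:ℝ) 1))) := by
    have : Integrable (fun p : E × ℝ => f p.1) (μ.prod (volume.restrict (Ioc (0:ℝ) 1))) := hf.comp_fst _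
    refine this.bdd_smul (Cd * ‖h‖) (Continuous.aestronglyMeasurable (by fun_prop)) (Eventually.of_forall fun p => ?_)
    exact (ContinuousLinearMap.le_opNorm _ _).trans (by gcongr; exact hCd _)
  have hI3 : Integrable (fun p : E × ℝ => ψ p.1 • D (p.1 + p.2 • h) h)
      (μ.prod (volume.restrict (Ioc (0:ℝ) 1))) := by
    refine hGi.bdd_smul Cψ (Continuous.aestronglyMeasurable (by fun_prop)) (Eventually.of_forall fun p => hCψ _)
  have e2 : ∫ x, (ψ x • ∫ τ in Ioc (0:ℝ) 1, D (x + τ • h) h) ∂μ =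
      ∫ x, (ψ (x - h) - ψ x) • f x ∂μ := by
    calc _ = ∫ x, (∫ τ in Ioc (0:ℝ) 1, ψ x • D (x + τ • h) h) ∂μ := by
          congr 1; ext x; rw [integral_smul]
      _ = ∫ τ in Ioc (0:ℝ) 1, (∫ x, ψ x • D (x + τ • h) h ∂μ) := integral_integral_swap hI3
      _ = ∫ τ in Ioc (0:ℝ) 1, (- ∫ x, fderiv ℝ ψ (x - τ • h) h • f x ∂μ) := by
          apply setIntegral_congr_fun measurableSet_Ioc
          intro τ hτ
          show ∫ x, ψ x • D (x + τ • h) h ∂μ = - ∫ x, fderiv ℝ ψ (x - τ • h) h • f x ∂μ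
          have h1 : ∫ x, ψ x • D (x + τ • h) h ∂μ = ∫ x, ψ (x - τ • h) • D x h ∂μ := by
            rw [← integral_add_right_eq_self (fun x => ψ (x - τ • h) • D x h) (τ • h)]; simp
          have hts : tsupport (fun x => ψ (x - τ • h)) = (fun x => x - τ • h) ⁻¹' tsupport ψ :=
            tsupport_comp_eq_preimage ψ (Homeomorph.subRight (τ • h))
          have := hweak (fun x => ψ (x - τ • h)) (hψ.comp (by fun_prop))
            (hψc.comp_homeomorph (Homeomorph.subRight (τ • h))) (by
              rw [hts]
              intro x hx
              have h2 := hψs hx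
              have := hWc.add_smul_mem h2.1 h2.2 (t := τ) ⟨hτ.1.le, hτ.2⟩
              simpa using this) h
          rw [h1, this]
          simp only [fderiv_comp_sub]
      _ = - ∫ τ in Ioc (0:ℝ) 1, (∫ x, fderiv ℝ ψ (x - τ • h) h • f x ∂μ) := integral_neg _
      _ = - ∫ x, (∫ τ in Ioc (0:ℝ) 1, fderiv ℝ ψ (x - τ • h) h • f x) ∂μ := by
          congr 1; exact (integral_integral_swap hI2).symm
      _ = _ := by
          rw [← integral_neg]
          congr 1; ext x
          rw [integral_smul_const, ← neg_smul]
          congr 1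
          have hder : ∀ τ ∈ uIcc (0:ℝ) 1, HasDerivAt (fun τ : ℝ => ψ (x - τ • h)) (-(fderiv ℝ ψ (x - τ • h) h)) τ := by
            intro τ _
            have h1 : HasFDerivAt ψ (fderiv ℝ ψ (x - τ • h)) (x - τ • h) :=
              (hψ.differentiable (by simp) _).hasFDerivAt
            have h2 : HasDerivAt (fun τ : ℝ => x - τ • h) (-h) τ := by
              have := ((hasDerivAt_id τ).smul_const h).const_sub x
              simpa using this
            have := h1.comp_hasDerivAt τ h2
            rw [map_neg] at this
            exact this
          have := intervalIntegral.integral_eq_sub_of_hasDerivAt hder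
            (Continuous.intervalIntegrable (by fun_prop) _ _)
          rw [intervalIntegral.integral_of_le zero_le_one, integral_neg] at this
          simpa using this
  rw [e0, e1, e2]
  simp only [sub_smul]
  rw [integral_sub hψh (bi hf), sub_self]

end TR


section SL
variable {E F : Type*} [NormedAddCommGroup E] [NormedSpace ℝ E] [FiniteDimensional ℝ E]
  [MeasurableSpace E] [BorelSpace E] (μ : Measure E) [μ.IsAddHaarMeasure]
  [NormedAddCommGroup F] [NormedSpace ℝ F] [FiniteDimensional ℝ F]
  [MeasurableSpace F] [BorelSpace F] (ν : Measure F) [ν.IsAddHaarMeasure]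

lemma map_prod_smul (L : (ℝ × F) ≃L[ℝ] E) : ∃ c : ℝ≥0, Measure.map L ((volume : Measure ℝ).prod ν) = c • μ := by
  haveI : (Measure.map L ((volume : Measure ℝ).prod ν)).IsAddHaarMeasure := L.isAddHaarMeasure_map _
  exact ⟨_, Measure.isAddLeftInvariant_eq_smul _ μ⟩

lemma slice_ae0 (L : (ℝ × F) ≃L[ℝ] E) {p : E → Prop} (hp : ∀ᵐ x ∂μ, p x) :
    ∀ᵐ z ∂((volume : Measure ℝ).prod ν), p (L z) := by
  obtain ⟨c, hc⟩ := map_prod_smul μ ν L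
  have : ∀ᵐ x ∂(Measure.map L ((volume : Measure ℝ).prod ν)), p x := by
    rw [hc]; exact (Measure.smul_absolutelyContinuous (c := c) (μ := μ)).ae_le hp
  exact ae_of_ae_map L.continuous.aemeasurable this

lemma slice_ae (L : (ℝ × F) ≃L[ℝ] E) {p : E → Prop} (hp : ∀ᵐ x ∂μ, p x) :
    ∀ᵐ t : ℝ, ∀ᵐ y ∂ν, p (L (t, y)) :=
  Measure.ae_ae_of_ae_prod (slice_ae0 μ ν L hp)

lemma slice_lint (L : (ℝ × F) ≃L[ℝ] E) {G : E → ℝ≥0∞} (hG : Measurable G) (hfin : ∫⁻ x, G x ∂μ ≠ ⊤) :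
    ∀ᵐ t : ℝ, ∫⁻ y, G (L (t, y)) ∂ν ≠ ⊤ := by
  obtain ⟨c, hc⟩ := map_prod_smul μ ν L
  have hm : Measurable (fun z => G (L z)) := hG.comp L.continuous.measurable
  have h1 : ∫⁻ z, G (L z) ∂((volume : Measure ℝ).prod ν) ≠ ⊤ := by
    rw [← lintegral_map hG L.continuous.measurable, hc, lintegral_smul_measure]
    exact ENNReal.mul_ne_top ENNReal.coe_ne_top hfin
  rw [lintegral_prod _ hm.aemeasurable] at h1
  filter_upwards [ae_lt_top (hm.lintegral_prod_right') h1] with t ht using ht.ne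

lemma slice_two (L : (ℝ × F) ≃L[ℝ] E) {Q : E → E → Prop} (hQ : MeasurableSet {p : E × E | Q p.1 p.2})
    (h : ∀ h : E, ∀ᵐ x ∂μ, Q x h) :
    ∀ᵐ t : ℝ, ∀ᵐ y ∂ν, ∀ᵐ y' ∂ν, Q (L (t, y)) (L (0, y' - y)) := by
  have h1 : ∀ᵐ h' ∂ν, ∀ᵐ z ∂((volume : Measure ℝ).prod ν), Q (L z) (L (0, h')) :=
    Eventually.of_forall fun h' => slice_ae0 μ ν L (h (L (0, h')))
  have h2 : ∀ᵐ z ∂((volume : Measure ℝ).prod ν), ∀ᵐ h' ∂ν, Q (L z) (L (0, h')) := by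
    refine (Measure.ae_ae_comm (p := fun h' z => Q (L z) (L (0, h'))) ?_).1 h1
    have : Measurable (fun p : F × (ℝ × F) => (L p.2, L (0, p.1))) :=
      (Continuous.measurable (by fun_prop))
    exact this hQ
  filter_upwards [Measure.ae_ae_of_ae_prod h2] with t ht
  filter_upwards [ht] with y hy
  exact (measurePreserving_sub_right ν y).quasiMeasurePreserving.ae hy

end SL


section LS
variable {E F : Type*} [NormedAddCommGroup E] [NormedSpace ℝ E] [FiniteDimensional ℝ E]
  [MeasurableSpace E] [BorelSpace E] (μ : Measure E) [μ.IsAddHaarMeasure]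
  [NormedAddCommGroup F] [NormedSpace ℝ F] [FiniteDimensional ℝ F]
  [MeasurableSpace F] [BorelSpace F] (ν : Measure F) [ν.IsAddHaarMeasure]
  {Y : Type*} [NormedAddCommGroup Y] [NormedSpace ℝ Y] [FiniteDimensional ℝ Y]
  [MeasurableSpace Y] [BorelSpace Y]

lemma localSlice (L : (ℝ × F) ≃L[ℝ] E) (hL : ∀ y, ‖L (0, y)‖ = ‖y‖)
    (k : ℕ) (hk : 2 ≤ k) (hF : Module.finrank ℝ F = k)
    (φ : ℝ → ℝ) (hmono : ∀ s t : ℝ, 0 < s → s ≤ t → φ s ≤ φ t)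
    (hpos : ∀ t : ℝ, 0 < t → 0 < φ t) (t₀ : ℝ) (ht₀ : 0 < t₀)
    (hint : IntegrableOn (fun t => (t / φ t) ^ (1 / ((k : ℝ) - 1))) (Ioi t₀) volume)
    (W : Set E) (hW : IsOpen W) (hWc : Convex ℝ W) (hWb : Bornology.IsBounded W)
    (f : E → Y) (hc : ContinuousOn f W) (hfi : IntegrableOn f W μ)
    (D : E → E →L[ℝ] Y) (hDi : IntegrableOn D W μ)
    (hweak : ∀ ψ : E → ℝ, ContDiff ℝ (⊤ : ℕ∞) ψ → HasCompactSupport ψ → tsupport ψ ⊆ W →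
      ∀ v : E, ∫ x, ψ x • D x v ∂μ = - ∫ x, fderiv ℝ ψ x v • f x ∂μ)
    (N : (E →L[ℝ] Y) → ℝ) (hN : Continuous N) (hNb : ∀ A h, ‖A h‖ ≤ N A * ‖h‖)
    (hφD : ∫⁻ x in W, ENNReal.ofReal (φ (N (D x))) ∂μ ≠ ⊤) :
    ∀ᵐ t : ℝ,
    (∀ A ⊆ {y | L (t, y) ∈ W}, ν A = 0 → (μH[(k:ℝ)] : Measure Y) ((fun y => f (L (t, y))) '' A) = 0) ∧
    (∀ ε : ℝ, 0 < ε → ∃ δ : ℝ, 0 < δ ∧ ∀ A ⊆ {y | L (t, y) ∈ W}, ν A < ENNReal.ofReal δ →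
      (μH[(k:ℝ)] : Measure Y) ((fun y => f (L (t, y))) '' A) < ENNReal.ofReal ε) ∧
    (∀ A ⊆ {y | L (t, y) ∈ W}, (∀ y ∈ A, N (D (L (t, y))) ≤ 0) →
      (μH[(k:ℝ)] : Measure Y) ((fun y => f (L (t, y))) '' A) = 0) := by
  haveI : CompleteSpace Y := FiniteDimensional.complete ℝ Y
  haveI : ProperSpace Y := FiniteDimensional.proper ℝ Y
  haveI : SecondCountableTopology Y := inferInstance
  haveI : ProperSpace E := FiniteDimensional.proper ℝ E
  haveI : SecondCountableTopology E := inferInstance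
  have hWm := hW.measurableSet
  set D0 : E → E →L[ℝ] Y := hDi.1.mk D with hD0
  have hD0m : StronglyMeasurable D0 := hDi.1.stronglyMeasurable_mk
  have hD0e : ∀ᵐ x ∂μ, x ∈ W → D x = D0 x := (ae_restrict_iff' hWm).1 hDi.1.ae_eq_mk
  set D1 : E → E →L[ℝ] Y := W.indicator D0 with hD1
  have hD1m : StronglyMeasurable D1 := hD0m.indicator hWm
  have hD1e : ∀ᵐ x ∂μ, x ∈ W → D x = D1 x := by
    filter_upwards [hD0e] with x hx hxW
    rw [hD1, indicator_of_mem hxW, hx hxW]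
  have hD1i : Integrable D1 μ := by
    have h0 : IntegrableOn D0 W μ := Integrable.congr hDi hDi.1.ae_eq_mk
    refine (integrable_indicator_iff (μ := μ) (f := D0) hWm).2 ?_
    exact h0
  set f1 : E → Y := W.indicator f with hf1
  have hf1i : Integrable f1 μ := (integrable_indicator_iff hWm).2 hfi
  have hf1m : Measurable f1 := by
    have := hc.measurable_piecewise (g := fun _ => (0:Y)) continuousOn_const hWm
    rwa [show W.piecewise f (fun _ => (0:Y)) = f1 from piecewise_eq_indicator] at this
  have hf1W : ∀ x ∈ W, f1 x = f x := fun x hx => indicator_of_mem hx f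
  have hweak1 : ∀ ψ : E → ℝ, ContDiff ℝ (⊤ : ℕ∞) ψ → HasCompactSupport ψ → tsupport ψ ⊆ W →
      ∀ v : E, ∫ x, ψ x • D1 x v ∂μ = - ∫ x, fderiv ℝ ψ x v • f1 x ∂μ := by
    intro ψ h1 h2 h3 v
    have e1 : ∫ x, ψ x • D1 x v ∂μ = ∫ x, ψ x • D x v ∂μ := by
      apply integral_congr_ae
      filter_upwards [hD1e] with x hx
      by_cases hxW : x ∈ W
      · simp only [hx hxW]
      · have : ψ x = 0 := image_eq_zero_of_notMem_tsupport fun h => hxW (h3 h)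
        simp only [this, zero_smul]
    have e2 : ∫ x, fderiv ℝ ψ x v • f1 x ∂μ = ∫ x, fderiv ℝ ψ x v • f x ∂μ := by
      congr 1; ext x
      by_cases hxW : x ∈ W
      · rw [hf1W x hxW]
      · have : fderiv ℝ ψ x = 0 := image_eq_zero_of_notMem_tsupport fun h => hxW (h3 (tsupport_fderiv_subset ℝ h))
        simp only [this, zero_apply, zero_smul]
    rw [e1, e2, hweak ψ h1 h2 h3 v]
  set g : E → ℝ := fun x => N (D1 x) with hg
  have hgm : Measurable g := (hN.comp_stronglyMeasurable hD1m).measurable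
  let Q : E → E → Prop := fun x h => x ∈ W → x + h ∈ W → edist (f1 x) (f1 (x + h)) ≤
    ENNReal.ofReal ‖h‖ * ∫⁻ τ in Ioo (0:ℝ) 1, ENNReal.ofReal (g (x + τ • h))
  have hQ : ∀ h, ∀ᵐ x ∂μ, Q x h := by
    intro h
    filter_upwards [transl μ W hW hWc f1 hf1i D1 hD1m hD1i hweak1 h] with x hx hx1 hx2
    rw [edist_comm, edist_eq_enorm_sub, hx hx1 hx2, integral_Ioc_eq_integral_Ioo]
    refine (enorm_integral_le_lintegral_enorm _).trans ?_
    rw [← lintegral_const_mul' _ _ ENNReal.ofReal_ne_top]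
    refine lintegral_mono fun τ => ?_
    rw [← ofReal_norm, ← ENNReal.ofReal_mul (norm_nonneg _), mul_comm]
    exact ENNReal.ofReal_le_ofReal (hNb _ _)
  have hQm : MeasurableSet {p : E × E | Q p.1 p.2} := by
    have m1 : MeasurableSet {p : E × E | p.1 ∈ W} := measurable_fst hWm
    have m2 : MeasurableSet {p : E × E | p.1 + p.2 ∈ W} := (measurable_fst.add measurable_snd) hWm
    have m3 : Measurable (fun p : E × E => ∫⁻ τ in Ioo (0:ℝ) 1, ENNReal.ofReal (g (p.1 + τ • p.2))) := by
      have : Measurable (fun q : (E × E) × ℝ => ENNReal.ofReal (g (q.1.1 + q.2 • q.1.2))) := by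
        refine (hgm.comp ?_).ennreal_ofReal
        exact Continuous.measurable (by fun_prop)
      exact this.lintegral_prod_right'
    have m4 : MeasurableSet {p : E × E | edist (f1 p.1) (f1 (p.1 + p.2)) ≤
        ENNReal.ofReal ‖p.2‖ * ∫⁻ τ in Ioo (0:ℝ) 1, ENNReal.ofReal (g (p.1 + τ • p.2))} := by
      refine measurableSet_le ?_ ?_
      · exact (hf1m.comp measurable_fst).edist (hf1m.comp (measurable_fst.add measurable_snd))
      · exact (measurable_snd.norm.ennreal_ofReal).mul m3
    exact m1.imp (m2.imp m4)
  set Φ : ℝ → ℝ := fun u => if 0 < u then φ u else 0 with hΦ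
  have hΦmono : Monotone Φ := by
    intro a b hab
    simp only [hΦ]
    split_ifs with h1 h2 h2
    · exact hmono a b h1 hab
    · exact absurd (h1.trans_le hab) h2
    · exact (hpos b h2).le
    · exact le_rfl
  have hΦeq : ∀ u, 0 < u → Φ u = φ u := fun u hu => if_pos hu
  have hΦg : Measurable (fun x => W.indicator (fun x => ENNReal.ofReal (Φ (g x))) x) :=
    ((hΦmono.measurable.comp hgm).ennreal_ofReal).indicator hWm
  have hfin : ∫⁻ x, W.indicator (fun x => ENNReal.ofReal (Φ (g x))) x ∂μ ≠ ⊤ := by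
    rw [lintegral_indicator hWm]
    refine ne_top_of_le_ne_top hφD ?_
    apply lintegral_mono_ae
    rw [ae_restrict_iff' hWm]
    filter_upwards [hD1e] with x hx hxW
    simp only [hg, ← hx hxW, hΦ]
    split_ifs
    · exact le_rfl
    · simp
  filter_upwards [slice_two μ ν L hQm hQ, slice_lint μ ν L hΦg hfin, slice_ae μ ν L hD1e] with t h1 h2 h3
  have hLc : Continuous (fun y : F => L (t, y)) := by fun_prop
  have hWt : IsOpen {y | L (t, y) ∈ W} := hW.preimage hLc
  have hWtb : Bornology.IsBounded {y | L (t, y) ∈ W} := by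
    have := ((ContinuousLinearMap.snd ℝ ℝ F).comp (L.symm : E →L[ℝ] ℝ × F)).lipschitz.isBounded_image hWb
    refine this.subset ?_
    intro y hy
    exact ⟨L (t, y), hy, by simp⟩
  obtain ⟨rN, rA, rZ⟩ := sliceFinal ν k hk hF Φ (fun s t _ h => hΦmono h)
    (fun u hu => by rw [hΦeq u hu]; exact hpos u hu) t₀ ht₀
    (hint.congr_fun (fun u hu => by simp only [hΦeq u (ht₀.trans hu)]) measurableSet_Ioi)
    {y | L (t, y) ∈ W} hWt hWtb.measure_lt_top.ne (fun y => f (L (t, y)))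
    (hc.comp hLc.continuousOn fun y hy => hy) (fun y => g (L (t, y)))
    (hgm.comp hLc.measurable)
    (by
      rw [← lintegral_indicator hWt.measurableSet]
      exact h2)
    (by
      filter_upwards [h1] with x hx
      filter_upwards [hx] with y hy hxW hyW
      have ea : L (t, x) + L (0, y - x) = L (t, y) := by rw [← map_add]; simp
      have eb : ∀ τ : ℝ, L (t, x) + τ • L (0, y - x) = L (t, x + τ • (y - x)) := by
        intro τ
        rw [← map_smul, ← map_add]; simp
      have := hy hxW (by rw [ea]; exact hyW)
      rw [ea, hL, hf1W _ hxW, hf1W _ hyW] at this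
      simpa only [eb] using this)
  refine ⟨rN, rA, ?_⟩
  intro A hA hA0
  set B := {y | ¬ (L (t, y) ∈ W → D (L (t, y)) = D1 (L (t, y)))}
  have hB : ν B = 0 := h3
  have hsub : (fun y => f (L (t, y))) '' A ⊆ (fun y => f (L (t, y))) '' (A ∩ B) ∪ (fun y => f (L (t, y))) '' (A \ B) := by
    rw [← image_union, inter_union_sdiff]
  refine measure_mono_null hsub (measure_union_null (rN _ (inter_subset_left.trans hA) (measure_mono_null inter_subset_right hB)) (rZ _ (sdiff_subset.trans hA) ?_))
  rintro y ⟨hyA, hyB⟩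
  have : D (L (t, y)) = D1 (L (t, y)) := (not_not.1 hyB) (hA hyA)
  simp only [hg, ← this]
  exact hA0 y hyA

end LS


lemma frob_cont {n m : ℕ} : Continuous (frobNorm : (Eucl n →L[ℝ] Eucl m) → ℝ) := by
  unfold frobNorm
  refine Real.continuous_sqrt.comp ?_
  refine continuous_finsetSum _ fun i _ => continuous_finsetSum _ fun j _ => ?_
  have h1 : Continuous (fun A : Eucl n →L[ℝ] Eucl m => A (EuclideanSpace.single j 1)) := by fun_prop
  have h2 : Continuous (fun x : Eucl m => x i) := by fun_prop
  exact (h2.comp h1).pow 2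

lemma frob_bound {n m : ℕ} (A : Eucl n →L[ℝ] Eucl m) (h : Eucl n) : ‖A h‖ ≤ frobNorm A * ‖h‖ := by
  rw [frobNorm, EuclideanSpace.norm_eq, EuclideanSpace.norm_eq, ← Real.sqrt_mul (by positivity)]
  apply Real.sqrt_le_sqrt
  rw [Finset.sum_mul]
  apply Finset.sum_le_sum
  intro i _
  have : A h i = ∑ j, A (EuclideanSpace.single j 1) i * h j := by
    have e : h = ∑ j, h j • EuclideanSpace.single j (1:ℝ) := by
      have := (EuclideanSpace.basisFun (Fin n) ℝ).sum_repr h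
      simpa using this.symm
    conv_lhs => rw [e]
    simp [map_sum, mul_comm]
  simp only [Real.norm_eq_abs, sq_abs]
  rw [this]
  exact Finset.sum_mul_sq_le_sq_mul_sq _ _ _

lemma exists_L {k : ℕ} (v : Eucl (k+1)) (hv : ‖v‖ = 1) :
    ∃ L : (ℝ × ((Submodule.span ℝ {v})ᗮ : Submodule ℝ (Eucl (k+1)))) ≃L[ℝ] Eucl (k+1), ∀ t y, L (t, y) = t • v + (y : Eucl (k+1)) := by
  set H : Submodule ℝ (Eucl (k+1)) := (Submodule.span ℝ {v})ᗮ
  have hvv : ⟪v, v⟫ = 1 := by rw [real_inner_self_eq_norm_sq, hv]; norm_num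
  have hH : ∀ y : Eucl (k+1), y ∈ H ↔ ⟪v, y⟫ = 0 := fun y => Submodule.mem_orthogonal_singleton_iff_inner_right
  let l : (ℝ × H) →ₗ[ℝ] Eucl (k+1) := (LinearMap.toSpanSingleton ℝ _ v).coprod H.subtype
  have hl : ∀ t y, l (t, y) = t • v + (y : Eucl (k+1)) := fun t y => by simp [l]
  have hb : Function.Bijective l := by
    constructor
    · rw [← LinearMap.ker_eq_bot, LinearMap.ker_eq_bot']
      rintro ⟨t, y⟩ h
      rw [hl] at h
      have h1 : ⟪v, t • v + (y : Eucl (k+1))⟫ = 0 := by rw [h, inner_zero_right]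
      rw [inner_add_right, inner_smul_right, hvv, (hH y).1 y.2] at h1
      have ht : t = 0 := by simpa using h1
      subst ht
      simp only [zero_smul, zero_add] at h
      ext1
      · rfl
      · exact Subtype.ext h
    · intro x
      refine ⟨(⟪v, x⟫, ⟨x - ⟪v, x⟫ • v, ?_⟩), ?_⟩
      · rw [hH, inner_sub_right, inner_smul_right, hvv]; ring
      · rw [hl]; simp
  exact ⟨(LinearEquiv.ofBijective l hb).toContinuousLinearEquiv, fun t y => hl t y⟩

/-- a continuous mapping `f : U → ℝᵐ` of class `W^{1,φ}_loc` with the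
Calderón-type condition on `φ` has the Luzin (N)-property w.r.t. `H^{n-1}` on almost every
hyperplane parallel to a fixed hyperplane (with unit normal `v`), is locally absolutely
continuous there, and on almost every such hyperplane `H^{n-1}(f(E)) = 0` whenever
`|∇f| = 0` on `E`. -/
theorem stmt_1 (n m : ℕ) (hn : 3 ≤ n) (hm : 1 ≤ m)
    (U : Set (Eucl n)) (hU : IsOpen U)
    (φ : ℝ → ℝ) (hφ : NondecPos φ) (hcal : CalderonCond n φ)
    (f : Eucl n → Eucl m) (Df : Eucl n → Eucl n →L[ℝ] Eucl m)
    (hf_cont : ContinuousOn f U)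
    (hf_sob : MemOrliczSobolevOn φ U f Df)
    (v : Eucl n) (hv : ‖v‖ = 1) :
    ∀ᵐ t ∂(volume : Measure ℝ),
      LusinNOn f ({x : Eucl n | ⟪x, v⟫ = t} ∩ U) ((n : ℝ) - 1) ∧
      LocACOnSet f ({x : Eucl n | ⟪x, v⟫ = t} ∩ U) ((n : ℝ) - 1) ∧
      ∀ E : Set (Eucl n), E ⊆ {x : Eucl n | ⟪x, v⟫ = t} ∩ U →
        (∀ x ∈ E, frobNorm (Df x) = 0) →
        (μH[((n : ℝ) - 1)] : Measure (Eucl m)) (f '' E) = 0 := by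
  obtain ⟨k, rfl⟩ : ∃ k, n = k + 1 := ⟨n - 1, by omega⟩
  have hk : 2 ≤ k := by omega
  set H : Submodule ℝ (Eucl (k+1)) := (Submodule.span ℝ {v})ᗮ with hHdef
  obtain ⟨L, hL⟩ : ∃ L : (ℝ × H) ≃L[ℝ] Eucl (k+1), ∀ t y, L (t, y) = t • v + (y : Eucl (k+1)) := exists_L v hv
  have hH : ∀ y : Eucl (k+1), y ∈ H ↔ ⟪v, y⟫ = 0 := fun y => Submodule.mem_orthogonal_singleton_iff_inner_right
  have hvv : ⟪v, v⟫ = 1 := by rw [real_inner_self_eq_norm_sq, hv]; norm_num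
  have hv0 : v ≠ 0 := by intro h; simp [h] at hv
  haveI : Fact (Module.finrank ℝ (Eucl (k+1)) = k + 1) := ⟨by simp⟩
  have hF : Module.finrank ℝ H = k := Submodule.finrank_orthogonal_span_singleton hv0
  set ν : Measure H := μH[(k:ℝ)] with hν
  haveI : ν.IsAddHaarMeasure := by
    have := isAddHaarMeasure_hausdorffMeasure (E := H)
    rwa [hF] at this
  obtain ⟨⟨hfl, hDl, hweak⟩, hK⟩ := hf_sob
  obtain ⟨t₀, ht₀, hint⟩ := hcal
  have e1 : ((k + 1 : ℕ) : ℝ) - 1 = k := by push_cast; ring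
  have e2 : ((k + 1 : ℕ) : ℝ) - 2 = k - 1 := by push_cast; ring
  rw [e2] at hint
  rw [e1]
  -- balls
  have hr : ∀ x : Eucl (k+1), ∃ r : ℝ, 0 < r ∧ (x ∈ U → closedBall x r ⊆ U) := by
    intro x
    by_cases hx : x ∈ U
    · obtain ⟨r, hr, h⟩ := Metric.nhds_basis_closedBall.mem_iff.1 (hU.mem_nhds hx)
      exact ⟨r, hr, fun _ => h⟩
    · exact ⟨1, one_pos, fun h => absurd h hx⟩
  choose r hr0 hrU using hr
  obtain ⟨S, hSU, hSc, hScov⟩ := TopologicalSpace.countable_cover_nhdsWithin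
    (f := fun x => ball x (r x)) (s := U) (fun x _ => mem_nhdsWithin_of_mem_nhds (ball_mem_nhds x (hr0 x)))
  have hall : ∀ᵐ t : ℝ, ∀ x ∈ S,
      (∀ A ⊆ {y | L (t, y) ∈ ball x (r x)}, ν A = 0 →
        (μH[(k:ℝ)] : Measure (Eucl m)) ((fun y => f (L (t, y))) '' A) = 0) ∧
      (∀ ε : ℝ, 0 < ε → ∃ δ : ℝ, 0 < δ ∧ ∀ A ⊆ {y | L (t, y) ∈ ball x (r x)}, ν A < ENNReal.ofReal δ →
        (μH[(k:ℝ)] : Measure (Eucl m)) ((fun y => f (L (t, y))) '' A) < ENNReal.ofReal ε) ∧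
      (∀ A ⊆ {y | L (t, y) ∈ ball x (r x)}, (∀ y ∈ A, frobNorm (Df (L (t, y))) ≤ 0) →
        (μH[(k:ℝ)] : Measure (Eucl m)) ((fun y => f (L (t, y))) '' A) = 0) := by
    refine (ae_ball_iff hSc).2 fun x hx => ?_
    have hbU : closedBall x (r x) ⊆ U := hrU x (hSU hx)
    have hbb : ball x (r x) ⊆ U := ball_subset_closedBall.trans hbU
    refine localSlice (volume : Measure (Eucl (k+1))) ν L (fun y => by rw [hL]; simp) k hk hF φ hφ.1 hφ.2 t₀ ht₀ hint
      (ball x (r x)) isOpen_ball (convex_ball _ _) isBounded_ball f (hf_cont.mono hbb)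
      ((hfl.integrableOn_compact_subset hbU (isCompact_closedBall _ _)).mono_set ball_subset_closedBall)
      Df ((hDl.integrableOn_compact_subset hbU (isCompact_closedBall _ _)).mono_set ball_subset_closedBall)
      (fun ψ h1 h2 h3 => hweak ψ h1 h2 (h3.trans hbb)) frobNorm frob_cont frob_bound
      (ne_top_of_le_ne_top (hK _ hbU (isCompact_closedBall _ _)).ne
        (lintegral_mono_set ball_subset_closedBall))
  filter_upwards [hall] with t ht
  have hiso : Isometry (fun y : H => L (t, y)) := by
    refine Isometry.of_dist_eq fun y z => ?_
    rw [hL, hL, dist_add_left]; rfl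
  have himg : ∀ A : Set (Eucl (k+1)), A ⊆ {x | ⟪x, v⟫ = t} →
      (fun y : H => L (t, y)) '' ((fun y : H => L (t, y)) ⁻¹' A) = A := by
    intro A hA
    rw [image_preimage_eq_iff]
    intro x hx
    have hxt : ⟪v, x⟫ = t := by rw [real_inner_comm]; exact hA hx
    refine ⟨⟨x - t • v, ?_⟩, ?_⟩
    · rw [hH, inner_sub_right, inner_smul_right, hvv, hxt]; ring
    · simp [hL]
  have hmeas : ∀ A : Set (Eucl (k+1)), A ⊆ {x | ⟪x, v⟫ = t} →
      ν ((fun y : H => L (t, y)) ⁻¹' A) = (μH[(k:ℝ)] : Measure (Eucl (k+1))) A := by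
    intro A hA
    rw [hν, ← hiso.hausdorffMeasure_image (Or.inl (by positivity)), himg A hA]
  have hfi : ∀ A : Set (Eucl (k+1)), A ⊆ {x | ⟪x, v⟫ = t} →
      f '' A = (fun y : H => f (L (t, y))) '' ((fun y : H => L (t, y)) ⁻¹' A) := by
    intro A hA
    conv_lhs => rw [← himg A hA, image_image]
  have hcover : ∀ A : Set (Eucl (k+1)), A ⊆ U →
      (∀ x ∈ S, (μH[(k:ℝ)] : Measure (Eucl m)) (f '' (A ∩ ball x (r x))) = 0) →
      (μH[(k:ℝ)] : Measure (Eucl m)) (f '' A) = 0 := by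
    intro A hA h
    refine measure_mono_null ?_ ((measure_biUnion_null_iff hSc).2 h)
    rintro _ ⟨a, ha, rfl⟩
    obtain ⟨x, hx, hax⟩ := mem_iUnion₂.1 (hScov (hA ha))
    exact mem_iUnion₂.2 ⟨x, hx, a, ⟨ha, hax⟩, rfl⟩
  refine ⟨?_, ?_, ?_⟩
  · intro A hA hA0
    refine hcover A (hA.trans inter_subset_right) fun x hx => ?_
    have hAt : A ∩ ball x (r x) ⊆ {x | ⟪x, v⟫ = t} := fun a ha => (hA ha.1).1
    rw [hfi _ hAt]
    refine (ht x hx).1 _ (fun y hy => hy.2) ?_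
    rw [hmeas _ hAt]
    exact measure_mono_null inter_subset_left hA0
  · intro a ha
    obtain ⟨x, hx, hax⟩ := mem_iUnion₂.1 (hScov ha.2)
    refine ⟨ball x (r x), isOpen_ball.mem_nhds hax, ?_⟩
    intro ε hε
    obtain ⟨δ, hδ, h⟩ := (ht x hx).2.1 ε hε
    refine ⟨δ, hδ, fun A hA hAδ => ?_⟩
    have hAt : A ⊆ {x | ⟪x, v⟫ = t} := fun a ha => (hA ha).1.1
    rw [hfi _ hAt]
    refine h _ (fun y hy => (hA hy).2) ?_
    rwa [hmeas _ hAt]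
  · intro A hA hA0
    refine hcover A (hA.trans inter_subset_right) fun x hx => ?_
    have hAt : A ∩ ball x (r x) ⊆ {x | ⟪x, v⟫ = t} := fun a ha => (hA ha.1).1
    rw [hfi _ hAt]
    exact (ht x hx).2.2 _ (fun y hy => hy.2) (fun y hy => (hA0 _ hy.1).le)
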